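/- arXiv:1704.07111 — 2 statements merged into one kernel-verified Lean document; each statement's English description precedes it below -/
import Mathlib

section
/- Let G be an infinite connected graph. Then G contains a T-join for every infinite subset T of its vertex set if and only if there is no set U of vertices of G such that every connected component of G − U is joined to U by exactly one edge of G and infinitely many of these components are nontrivial (i.e., have more than one vertex). -/
namespace SimpleGraph

variable {V : Type*}

/-- A `T`-join in `G`: a set `P` of (oriented) paths, pairwise edge-disjoint, each with two
distinct endpoints lying in `T`, such that every vertex of `T` is an endpoint of exactly one
path of `P`. -/
def IsTJoin (G : SimpleGraph V) (T : Set V) (P : Set (Σ u : V, Σ v : V, G.Walk u v)) : Prop :=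
  (∀ p ∈ P, p.2.2.IsPath ∧ p.1 ≠ p.2.1 ∧ p.1 ∈ T ∧ p.2.1 ∈ T) ∧
  (∀ p ∈ P, ∀ q ∈ P, p ≠ q → ∀ e ∈ p.2.2.edges, e ∉ q.2.2.edges) ∧
  (∀ t ∈ T, ∃! p, p ∈ P ∧ (p.1 = t ∨ p.2.1 = t))

/-- `G` contains a `T`-join. -/
def HasTJoin (G : SimpleGraph V) (T : Set V) : Prop := ∃ P, G.IsTJoin T P

end SimpleGraph

namespace SimpleGraph

variable {V : Type*}

/-- The vertex set (inside `V`) of a connected component `C` of `G − U`. -/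
def compSet (G : SimpleGraph V) (U : Set V)
    (C : (G.induce (Uᶜ : Set V)).ConnectedComponent) : Set V :=
  Subtype.val '' C.supp

/-- The connected component `C` of `G − U` is joined to `U` by exactly one edge of `G`. -/
def JoinedByExactlyOneEdge (G : SimpleGraph V) (U : Set V)
    (C : (G.induce (Uᶜ : Set V)).ConnectedComponent) : Prop :=
  ∃! e : Sym2 V, e ∈ G.edgeSet ∧ ∃ x ∈ G.compSet U C, ∃ y ∈ U, e = s(x, y)

end SimpleGraph


namespace TJ

open Set

universe u w
variable {V : Type u}

/-- `u` and `v` are connected by edges of `A`. -/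
def Conn (A : Set (Sym2 V)) (u v : V) : Prop :=
  Relation.ReflTransGen (fun a b => s(a, b) ∈ A) u v

theorem Conn.refl {A : Set (Sym2 V)} (u : V) : Conn A u u := Relation.ReflTransGen.refl

theorem Conn.trans {A : Set (Sym2 V)} {u v w : V} (h : Conn A u v) (h' : Conn A v w) :
    Conn A u w := Relation.ReflTransGen.trans h h'

theorem Conn.edge {A : Set (Sym2 V)} {u v : V} (h : s(u, v) ∈ A) : Conn A u v :=
  Relation.ReflTransGen.single h

theorem Conn.symm {A : Set (Sym2 V)} {u v : V} (h : Conn A u v) : Conn A v u := by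
  induction h with
  | refl => exact Conn.refl _
  | tail _ h ih =>
    refine Conn.trans (Conn.edge ?_) ih
    rw [Sym2.eq_swap]; exact h

theorem Conn.mono {A B : Set (Sym2 V)} (hAB : A ⊆ B) {u v : V} (h : Conn A u v) :
    Conn B u v := by
  induction h with
  | refl => exact Conn.refl _
  | tail _ h ih => exact ih.trans (Conn.edge (hAB h))

theorem Conn.inv {A : Set (Sym2 V)} {u v : V} (h : Conn A u v) (S : Set V) (hu : u ∈ S)
    (hS : ∀ a b, a ∈ S → s(a, b) ∈ A → b ∈ S) : v ∈ S := by
  induction h with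
  | refl => exact hu
  | tail _ h ih => exact hS _ _ ih h

/-- Edges `X` in the component of `z` are not needed for other components. -/
theorem Conn.avoid {E X : Set (Sym2 V)} {z x v : V} (hX : ∀ a b, s(a, b) ∈ X → Conn E z a)
    (hzx : ¬ Conn E z x) (h : Conn E x v) : Conn (E \ X) x v := by
  induction h with
  | refl => exact Conn.refl _
  | tail h1 h2 ih =>
    refine ih.trans (Conn.edge ⟨h2, fun hx => hzx ?_⟩)
    exact (hX _ _ hx).trans (Conn.symm h1)

theorem conn_walk {G : SimpleGraph V} {A : Set (Sym2 V)} (hA : A ⊆ G.edgeSet) {u v : V}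
    (h : Conn A u v) : ∃ q : G.Walk u v, q.IsPath ∧ ∀ e ∈ q.edges, e ∈ A := by
  classical
  have : ∃ q : G.Walk u v, ∀ e ∈ q.edges, e ∈ A := by
    induction h with
    | refl => exact ⟨SimpleGraph.Walk.nil, by simp⟩
    | @tail b c _ h ih =>
      obtain ⟨q, hq⟩ := ih
      have hadj : G.Adj b c := by have := hA h; simpa using this
      refine ⟨q.concat hadj, ?_⟩
      intro e he
      rw [SimpleGraph.Walk.edges_concat] at he
      simp only [List.concat_eq_append, List.mem_append, List.mem_singleton] at he
      rcases he with he | rfl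
      · exact hq e he
      · exact h
  obtain ⟨q, hq⟩ := this
  exact ⟨q.bypass, q.bypass_isPath, fun e he => hq e (q.edges_bypass_subset_edges he)⟩

theorem walk_conn {G : SimpleGraph V} {X : Set (Sym2 V)} {u v : V} (q : G.Walk u v)
    (h : ∀ e ∈ q.edges, e ∈ X) : Conn X u v := by
  induction q with
  | nil => exact Conn.refl _
  | cons hadj p ih =>
    simp only [SimpleGraph.Walk.edges_cons, List.mem_cons, forall_eq_or_imp] at h
    exact (Conn.edge h.1).trans (ih h.2)

/-- Pairing of `T` by edge-disjoint connections inside `E`. -/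
def J0 (E : Set (Sym2 V)) (T : Set V) : Prop :=
  ∃ P : Set (V × V × Set (Sym2 V)),
    (∀ q ∈ P, q.1 ≠ q.2.1 ∧ q.1 ∈ T ∧ q.2.1 ∈ T ∧ q.2.2 ⊆ E ∧ Conn q.2.2 q.1 q.2.1) ∧
    (∀ q ∈ P, ∀ q' ∈ P, q ≠ q' → Disjoint q.2.2 q'.2.2) ∧
    (∀ t ∈ T, ∃! q, q ∈ P ∧ (q.1 = t ∨ q.2.1 = t))

/-- Pairing of `T` minus one vertex, which is connected to `z`. -/
def J1 (E : Set (Sym2 V)) (T : Set V) (z : V) : Prop :=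
  ∃ τ ∈ T, ∃ A ⊆ E, Conn A τ z ∧ J0 (E \ A) (T \ {τ})

theorem J0.mono {E E' : Set (Sym2 V)} {T : Set V} (h : J0 E T) (hE : E ⊆ E') : J0 E' T := by
  obtain ⟨P, h1, h2, h3⟩ := h
  exact ⟨P, fun q hq => ⟨(h1 q hq).1, (h1 q hq).2.1, (h1 q hq).2.2.1,
    (h1 q hq).2.2.2.1.trans hE, (h1 q hq).2.2.2.2⟩, h2, h3⟩

theorem J0_empty (E : Set (Sym2 V)) : J0 E ∅ :=
  ⟨∅, by simp, by simp, by simp⟩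

theorem J0_pair {A : Set (Sym2 V)} {s t : V} (hst : s ≠ t) (h : Conn A s t) : J0 A {s, t} := by
  refine ⟨{(s, t, A)}, ?_, ?_, ?_⟩
  · rintro q rfl
    exact ⟨hst, by simp, by simp, Subset.rfl, h⟩
  · rintro q rfl q' rfl h; exact absurd rfl h
  · intro x hx
    refine ⟨(s, t, A), ⟨rfl, ?_⟩, fun q hq => hq.1⟩
    rcases hx with rfl | rfl <;> simp

theorem J0_iUnion {ι : Type*} {E : ι → Set (Sym2 V)} {T : ι → Set V}
    (hE : ∀ i j, i ≠ j → Disjoint (E i) (E j)) (hT : ∀ i j, i ≠ j → Disjoint (T i) (T j))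
    (h : ∀ i, J0 (E i) (T i)) : J0 (⋃ i, E i) (⋃ i, T i) := by
  choose P h1 h2 h3 using h
  refine ⟨⋃ i, P i, ?_, ?_, ?_⟩
  · intro q hq
    obtain ⟨i, hi⟩ := mem_iUnion.1 hq
    obtain ⟨a, b, c, d, e⟩ := h1 i q hi
    exact ⟨a, mem_iUnion_of_mem i b, mem_iUnion_of_mem i c,
      d.trans (subset_iUnion E i), e⟩
  · intro q hq q' hq' hne
    obtain ⟨i, hi⟩ := mem_iUnion.1 hq
    obtain ⟨j, hj⟩ := mem_iUnion.1 hq'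
    by_cases hij : i = j
    · subst hij; exact h2 i q hi q' hj hne
    · exact (hE i j hij).mono (h1 i q hi).2.2.2.1 (h1 j q' hj).2.2.2.1
  · intro t ht
    obtain ⟨i, hi⟩ := mem_iUnion.1 ht
    obtain ⟨q, ⟨hq, hqt⟩, huniq⟩ := h3 i t hi
    refine ⟨q, ⟨mem_iUnion_of_mem i hq, hqt⟩, ?_⟩
    rintro q' ⟨hq', hqt'⟩
    obtain ⟨j, hj⟩ := mem_iUnion.1 hq'
    have htj : t ∈ T j := by
      rcases hqt' with h | h
      · rw [← h]; exact (h1 j q' hj).2.1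
      · rw [← h]; exact (h1 j q' hj).2.2.1
    have hij : i = j := by
      by_contra hij
      exact Set.disjoint_left.1 (hT i j hij) hi htj
    subst hij
    exact huniq q' ⟨hj, hqt'⟩

theorem J0_union {E E' : Set (Sym2 V)} {T T' : Set V} (hE : Disjoint E E') (hT : Disjoint T T')
    (h : J0 E T) (h' : J0 E' T') : J0 (E ∪ E') (T ∪ T') := by
  have := J0_iUnion (E := fun b : Bool => cond b E E') (T := fun b : Bool => cond b T T')
    (by rintro (_|_) (_|_) h <;> simp_all [disjoint_comm])
    (by rintro (_|_) (_|_) h <;> simp_all [disjoint_comm])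
    (by rintro (_|_) <;> simpa)
  rwa [← Set.union_eq_iUnion, ← Set.union_eq_iUnion] at this

theorem J1.extend {E B : Set (Sym2 V)} {T : Set V} {z w : V} (h : J1 E T z) (hB : Conn B z w)
    (hBE : Disjoint B E) : J1 (E ∪ B) T w := by
  obtain ⟨τ, hτ, A, hA, hc, hJ⟩ := h
  refine ⟨τ, hτ, A ∪ B, union_subset_union_left _ hA,
    (hc.mono subset_union_left).trans (hB.mono subset_union_right), hJ.mono ?_⟩
  intro e he
  refine ⟨Or.inl he.1, ?_⟩
  rintro (h | h)
  · exact he.2 h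
  · exact Set.disjoint_left.1 hBE h he.1

theorem J1.mono {E E' : Set (Sym2 V)} {T : Set V} {z : V} (h : J1 E T z) (hE : E ⊆ E') :
    J1 E' T z := by
  obtain ⟨τ, hτ, A, hA, hc, hJ⟩ := h
  exact ⟨τ, hτ, A, hA.trans hE, hc, hJ.mono (sdiff_subset_sdiff_left hE)⟩

theorem J1_J0 {E E' : Set (Sym2 V)} {T T' : Set V} {z : V} (hE : Disjoint E E')
    (hT : Disjoint T T') (h : J1 E T z) (h' : J0 E' T') : J1 (E ∪ E') (T ∪ T') z := by
  obtain ⟨τ, hτ, A, hA, hc, hJ⟩ := h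
  refine ⟨τ, Or.inl hτ, A, hA.trans subset_union_left, hc, ?_⟩
  have := J0_union (hE.mono_left sdiff_subset) (hT.mono_left sdiff_subset) hJ h'
  have e1 : (T ∪ T') \ {τ} = T \ {τ} ∪ T' := by
    rw [union_sdiff_distrib, sdiff_singleton_eq_self (s := T')]
    exact Set.disjoint_left.1 hT hτ
  rw [e1]
  refine this.mono ?_
  rintro e (he | he)
  · exact ⟨Or.inl he.1, he.2⟩
  · exact ⟨Or.inr he, fun h => Set.disjoint_left.1 hE (hA h) he⟩

theorem J1_J1 {E E' : Set (Sym2 V)} {T T' : Set V} {z : V} (hE : Disjoint E E')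
    (hT : Disjoint T T') (h : J1 E T z) (h' : J1 E' T' z) : J0 (E ∪ E') (T ∪ T') := by
  obtain ⟨τ, hτ, A, hA, hc, hJ⟩ := h
  obtain ⟨τ', hτ', A', hA', hc', hJ'⟩ := h'
  have hne : τ ≠ τ' := by rintro rfl; exact Set.disjoint_left.1 hT hτ hτ'
  have h1 := J0_union (hE.mono sdiff_subset sdiff_subset)
    (hT.mono sdiff_subset sdiff_subset) hJ hJ'
  have h2 : J0 (A ∪ A') {τ, τ'} := J0_pair hne
    ((hc.mono subset_union_left).trans (hc'.symm.mono subset_union_right))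
  have h3 := J0_union (E := A ∪ A') (E' := E \ A ∪ E' \ A') (T := {τ, τ'})
    (T' := T \ {τ} ∪ T' \ {τ'}) ?_ ?_ h2 h1
  · have e1 : {τ, τ'} ∪ (T \ {τ} ∪ T' \ {τ'}) = T ∪ T' := by
      ext x; simp only [mem_union, mem_insert_iff, mem_singleton_iff, mem_sdiff]
      constructor
      · rintro ((rfl | rfl) | h | h) <;> tauto
      · intro h; by_cases x = τ <;> by_cases x = τ' <;> tauto
    rw [e1] at h3
    refine h3.mono ?_
    rintro e ((h | h) | h | h)
    · exact Or.inl (hA h)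
    · exact Or.inr (hA' h)
    · exact Or.inl h.1
    · exact Or.inr h.1
  · rw [Set.disjoint_left]
    rintro e (h | h) (h' | h')
    · exact h'.2 h
    · exact Set.disjoint_left.1 hE (hA h) h'.1
    · exact Set.disjoint_left.1 hE h'.1 (hA' h)
    · exact h'.2 h
  · rw [Set.disjoint_left]
    rintro e (rfl | rfl) (h' | h')
    · exact h'.2 rfl
    · exact Set.disjoint_left.1 hT hτ h'.1
    · exact Set.disjoint_left.1 hT h'.1 hτ'
    · exact h'.2 rfl

theorem pair_up (X : Type w) : ∃ (Y : Type w), Nonempty (X ≃ Y × Bool) ∨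
    Nonempty (X ≃ Option (Y × Bool)) := by
  rcases finite_or_infinite X with h | h
  · obtain ⟨n, ⟨e⟩⟩ := Finite.exists_equiv_fin X
    rcases Nat.even_or_odd' n with ⟨k, rfl | rfl⟩
    · refine ⟨ULift (Fin k), Or.inl ⟨e.trans ?_⟩⟩
      exact Fintype.equivOfCardEq (by simp [mul_comm])
    · refine ⟨ULift (Fin k), Or.inr ⟨e.trans ?_⟩⟩
      exact Fintype.equivOfCardEq (by simp [mul_comm])
  · refine ⟨X, Or.inl ?_⟩
    have : Cardinal.mk X = Cardinal.mk (X × ULift.{_} Bool) := by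
      simp only [Cardinal.mk_prod, Cardinal.lift_id, Cardinal.mk_fintype]
      have e2 : ((Fintype.card (ULift Bool) : ℕ) : Cardinal) = 2 := by simp
      rw [e2]
      exact (Cardinal.mul_eq_left (Cardinal.aleph0_le_mk X)
        ((Cardinal.natCast_lt_aleph0 (n := 2)).le.trans (Cardinal.aleph0_le_mk X)) two_ne_zero).symm
    obtain ⟨e⟩ := Cardinal.eq.1 this
    exact ⟨e.trans (Equiv.prodCongr (Equiv.refl _) Equiv.ulift)⟩

theorem pool {ι : Type*} {E : ι → Set (Sym2 V)} {T : ι → Set V} {v : V}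
    (hE : ∀ i j, i ≠ j → Disjoint (E i) (E j)) (hT : ∀ i j, i ≠ j → Disjoint (T i) (T j))
    (h : ∀ i, J0 (E i) (T i) ∨ J1 (E i) (T i) v) :
    J0 (⋃ i, E i) (⋃ i, T i) ∨ J1 (⋃ i, E i) (⋃ i, T i) v := by
  classical
  obtain ⟨Y, hY⟩ := pair_up {i : ι // ¬ J0 (E i) (T i)}
  have h1 : ∀ i : {i : ι // ¬ J0 (E i) (T i)}, J1 (E i) (T i) v := fun i => (h i).resolve_left i.2
  -- family of pairs and singles
  have key : ∀ f : Y × Bool → {i : ι // ¬ J0 (E i) (T i)}, Function.Injective f →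
      J0 (⋃ i ∈ {i | J0 (E i) (T i)} ∪ range (fun y => (f y).1), E i)
        (⋃ i ∈ {i | J0 (E i) (T i)} ∪ range (fun y => (f y).1), T i) := by
    intro f hf
    have hf' : Function.Injective (fun y => (f y).1) := Subtype.val_injective.comp hf
    have := J0_iUnion (ι := {i // J0 (E i) (T i)} ⊕ Y)
      (E := Sum.elim (fun i => E i.1) (fun y => E (f (y, false)).1 ∪ E (f (y, true)).1))
      (T := Sum.elim (fun i => T i.1) (fun y => T (f (y, false)).1 ∪ T (f (y, true)).1)) ?_ ?_ ?_
    · convert this using 1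
      · ext x
        simp only [mem_iUnion, exists_prop, Sum.exists, Sum.elim_inl, Sum.elim_inr, mem_union,
          mem_ofPred_eq, mem_range, Prod.exists, Bool.exists_bool, Subtype.exists]
        grind
      · ext x
        simp only [mem_iUnion, exists_prop, Sum.exists, Sum.elim_inl, Sum.elim_inr, mem_union,
          mem_ofPred_eq, mem_range, Prod.exists, Bool.exists_bool, Subtype.exists]
        grind
    · rintro (i | y) (j | y') hne
      · exact hE _ _ (fun h => hne (by rw [Subtype.ext h]))
      · simp only [Sum.elim_inl, Sum.elim_inr, disjoint_union_right]
        exact ⟨hE _ _ fun h => (f (y', false)).2 (h ▸ i.2), hE _ _ fun h => (f (y', true)).2 (h ▸ i.2)⟩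
      · simp only [Sum.elim_inl, Sum.elim_inr, disjoint_union_left]
        exact ⟨hE _ _ fun h => (f (y, false)).2 (h ▸ j.2), hE _ _ fun h => (f (y, true)).2 (h ▸ j.2)⟩
      · have hyy : y ≠ y' := fun h => hne (by rw [h])
        simp only [Sum.elim_inr, disjoint_union_left, disjoint_union_right]
        refine ⟨⟨?_, ?_⟩, ?_, ?_⟩ <;> refine hE _ _ fun h => hyy ?_ <;>
          exact congrArg Prod.fst (hf' h)
    · rintro (i | y) (j | y') hne
      · exact hT _ _ (fun h => hne (by rw [Subtype.ext h]))
      · simp only [Sum.elim_inl, Sum.elim_inr, disjoint_union_right]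
        exact ⟨hT _ _ fun h => (f (y', false)).2 (h ▸ i.2), hT _ _ fun h => (f (y', true)).2 (h ▸ i.2)⟩
      · simp only [Sum.elim_inl, Sum.elim_inr, disjoint_union_left]
        exact ⟨hT _ _ fun h => (f (y, false)).2 (h ▸ j.2), hT _ _ fun h => (f (y, true)).2 (h ▸ j.2)⟩
      · have hyy : y ≠ y' := fun h => hne (by rw [h])
        simp only [Sum.elim_inr, disjoint_union_left, disjoint_union_right]
        refine ⟨⟨?_, ?_⟩, ?_, ?_⟩ <;> refine hT _ _ fun h => hyy ?_ <;>
          exact congrArg Prod.fst (hf' h)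
    · rintro (i | y)
      · exact i.2
      · have hne : (f (y, false)).1 ≠ (f (y, true)).1 := fun h => by
          have := hf' h; simp at this
        exact J1_J1 (hE _ _ hne) (hT _ _ hne) (h1 _) (h1 _)
  rcases hY with ⟨⟨e⟩⟩ | ⟨⟨e⟩⟩
  · left
    have := key e.symm e.symm.injective
    have huniv : {i | J0 (E i) (T i)} ∪ range (fun y => (e.symm y).1) = univ := by
      ext i
      simp only [mem_union, mem_ofPred_eq, mem_range, mem_univ, iff_true]
      by_cases hi : J0 (E i) (T i)
      · exact Or.inl hi
      · exact Or.inr ⟨e ⟨i, hi⟩, by simp⟩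
    simpa [huniv] using this
  · right
    have := key (fun y => e.symm (some y)) (e.symm.injective.comp (Option.some_injective _))
    set i0 := e.symm none with hi0
    set S := {i | J0 (E i) (T i)} ∪ range (fun y => (e.symm (some y)).1) with hS
    have hi0S : i0.1 ∉ S := by
      rintro (h | ⟨y, hy⟩)
      · exact i0.2 h
      · have := e.symm.injective (Subtype.ext hy); simp at this
    have huniv : ∀ i, i = i0.1 ∨ i ∈ S := by
      intro i
      by_cases hi : J0 (E i) (T i)
      · exact Or.inr (Or.inl hi)
      · rcases hy : e ⟨i, hi⟩ with _ | y
        · left; rw [hi0, ← hy]; simp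
        · right; right; exact ⟨y, by simp only [← hy]; simp⟩
    have hd : ∀ i ∈ S, i0.1 ≠ i := fun i hi h => hi0S (h ▸ hi)
    have h2 := J1_J0 (E' := ⋃ i ∈ S, E i) (T' := ⋃ i ∈ S, T i) ?_ ?_ (h1 i0) this
    · have eE : (⋃ i, E i) = E i0.1 ∪ ⋃ i ∈ S, E i := by
        ext x; simp only [mem_iUnion, mem_union, exists_prop]
        constructor
        · rintro ⟨i, hi⟩
          rcases huniv i with rfl | h
          · exact Or.inl hi
          · exact Or.inr ⟨i, h, hi⟩
        · rintro (h | ⟨i, _, h⟩)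
          exacts [⟨_, h⟩, ⟨_, h⟩]
      have eT : (⋃ i, T i) = T i0.1 ∪ ⋃ i ∈ S, T i := by
        ext x; simp only [mem_iUnion, mem_union, exists_prop]
        constructor
        · rintro ⟨i, hi⟩
          rcases huniv i with rfl | h
          · exact Or.inl hi
          · exact Or.inr ⟨i, h, hi⟩
        · rintro (h | ⟨i, _, h⟩)
          exacts [⟨_, h⟩, ⟨_, h⟩]
      rw [eE, eT]; exact h2
    · simp only [disjoint_iUnion_right]; exact fun i hi => hE _ _ (hd i hi)
    · simp only [disjoint_iUnion_right]; exact fun i hi => hT _ _ (hd i hi)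

end TJ


namespace TJ

open Set

universe u w
variable {V : Type u}

theorem J0_sub {E E' : Set (Sym2 V)} {T T' : Set V} (h : J0 E T) (hE : E ⊆ E') (hT : T = T') :
    J0 E' T' := hT ▸ h.mono hE

theorem ray {E l : ℕ → Set (Sym2 V)} {T : ℕ → Set V} {q : ℕ → V}
    (hE : ∀ i j, i ≠ j → Disjoint (E i) (E j)) (hT : ∀ i j, i ≠ j → Disjoint (T i) (T j))
    (hl : ∀ i j, i ≠ j → Disjoint (l i) (l j)) (hEl : ∀ i j, Disjoint (E i) (l j))
    (hc : ∀ k, Conn (l k) (q k) (q (k + 1)))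
    (h : ∀ k, J0 (E k) (T k) ∨ J1 (E k) (T k) (q k))
    (hinf : ∀ n, ∃ k ≥ n, ¬ J0 (E k) (T k)) :
    J0 ((⋃ k, E k) ∪ ⋃ k, l k) (⋃ k, T k) := by
  have hseg : ∀ m n, m ≤ n → Conn (⋃ k ∈ Ico m n, l k) (q m) (q n) := by
    intro m n hmn
    induction n, hmn using Nat.le_induction with
    | base => exact Conn.refl _
    | succ n hmn ih =>
      refine (ih.mono ?_).trans ((hc n).mono ?_)
      · exact biUnion_subset_biUnion_left (Ico_subset_Ico_right (Nat.le_succ n))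
      · exact subset_biUnion_of_mem (u := l) (show n ∈ Ico m (n+1) from ⟨hmn, Nat.lt_succ_self n⟩)
  have hinf' : (setOf fun k => ¬ J0 (E k) (T k)).Infinite := by
    rw [Set.infinite_iff_exists_gt]
    intro n
    obtain ⟨k, hk, hk'⟩ := hinf (n + 1)
    exact ⟨k, hk', hk⟩
  set a := Nat.nth (fun k => ¬ J0 (E k) (T k)) with ha
  have hamono : StrictMono a := Nat.nth_strictMono hinf'
  have hamem : ∀ n, ¬ J0 (E (a n)) (T (a n)) := fun n => Nat.nth_mem_of_infinite hinf' n
  have harange : ∀ k, ¬ J0 (E k) (T k) → ∃ n, a n = k := by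
    intro k hk
    have : k ∈ range a := by rw [ha, Nat.range_nth_of_infinite hinf']; exact hk
    exact this
  let S : {k // J0 (E k) (T k)} ⊕ ℕ → Set ℕ :=
    Sum.elim (fun k => {k.1}) (fun m => {a (2*m), a (2*m+1)})
  let L : {k // J0 (E k) (T k)} ⊕ ℕ → Set ℕ :=
    Sum.elim (fun k => ∅) (fun m => Ico (a (2*m)) (a (2*m+1)))
  have hS : ∀ i j, i ≠ j → ∀ x ∈ S i, ∀ y ∈ S j, x ≠ y := by
    rintro (i | m) (j | m') hne x hx y hy rfl
    · simp only [S, Sum.elim_inl, mem_singleton_iff] at hx hy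
      exact hne (by rw [Subtype.ext (hx.symm.trans hy)])
    · simp only [S, Sum.elim_inl, Sum.elim_inr, mem_singleton_iff, mem_insert_iff] at hx hy
      have := i.2
      rw [← hx] at this
      rcases hy with rfl | rfl <;> exact hamem _ this
    · simp only [S, Sum.elim_inl, Sum.elim_inr, mem_singleton_iff, mem_insert_iff] at hx hy
      have := j.2
      rw [← hy] at this
      rcases hx with rfl | rfl <;> exact hamem _ this
    · simp only [S, Sum.elim_inr, mem_singleton_iff, mem_insert_iff] at hx hy
      have hmm : m ≠ m' := fun h => hne (by rw [h])
      rcases hx with rfl | rfl <;> rcases hy with hy | hy <;>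
        have := hamono.injective hy <;> omega
  have hL : ∀ i j, i ≠ j → ∀ x ∈ L i, ∀ y ∈ L j, x ≠ y := by
    rintro (i | m) (j | m') hne x hx y hy rfl
    · simp [L] at hx
    · simp [L] at hx
    · simp [L] at hy
    · simp only [L, Sum.elim_inr, mem_Ico] at hx hy
      have h1 := hamono.lt_iff_lt.1 (hx.1.trans_lt hy.2)
      have h2 := hamono.lt_iff_lt.1 (hy.1.trans_lt hx.2)
      have hmm : m = m' := by omega
      exact hne (by rw [hmm])
  have key := J0_iUnion (E := fun i => (⋃ k ∈ S i, E k) ∪ ⋃ k ∈ L i, l k)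
    (T := fun i => ⋃ k ∈ S i, T k) ?_ ?_ ?_
  · refine J0_sub key ?_ ?_
    · intro e he
      obtain ⟨i, hi⟩ := mem_iUnion.1 he
      rcases hi with hi | hi
      · obtain ⟨k, _, hk⟩ := mem_iUnion₂.1 hi
        exact Or.inl (mem_iUnion_of_mem k hk)
      · obtain ⟨k, _, hk⟩ := mem_iUnion₂.1 hi
        exact Or.inr (mem_iUnion_of_mem k hk)
    · apply Subset.antisymm
      · intro e he
        obtain ⟨i, hi⟩ := mem_iUnion.1 he
        obtain ⟨k, _, hk⟩ := mem_iUnion₂.1 hi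
        exact mem_iUnion_of_mem k hk
      · intro e he
        obtain ⟨k, hk⟩ := mem_iUnion.1 he
        by_cases hJ : J0 (E k) (T k)
        · exact mem_iUnion_of_mem (Sum.inl ⟨k, hJ⟩) (mem_iUnion₂_of_mem (by simp [S]) hk)
        · obtain ⟨n, rfl⟩ := harange k hJ
          obtain ⟨m, rfl | rfl⟩ := Nat.even_or_odd' n
          · exact mem_iUnion_of_mem (Sum.inr m) (mem_iUnion₂_of_mem (by simp [S]) hk)
          · exact mem_iUnion_of_mem (Sum.inr m) (mem_iUnion₂_of_mem (by simp [S]) hk)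
  · intro i j hij
    rw [Set.disjoint_left]
    rintro e (h1 | h1) (h2 | h2) <;> obtain ⟨k, hk, hek⟩ := mem_iUnion₂.1 h1 <;>
      obtain ⟨k', hk', hek'⟩ := mem_iUnion₂.1 h2
    · exact Set.disjoint_left.1 (hE _ _ (hS i j hij k hk k' hk')) hek hek'
    · exact Set.disjoint_left.1 (hEl _ _) hek hek'
    · exact Set.disjoint_left.1 (hEl _ _) hek' hek
    · exact Set.disjoint_left.1 (hl _ _ (hL i j hij k hk k' hk')) hek hek'
  · intro i j hij
    rw [Set.disjoint_left]
    rintro e h1 h2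
    obtain ⟨k, hk, hek⟩ := mem_iUnion₂.1 h1
    obtain ⟨k', hk', hek'⟩ := mem_iUnion₂.1 h2
    exact Set.disjoint_left.1 (hT _ _ (hS i j hij k hk k' hk')) hek hek'
  · rintro (k | m)
    · simpa [S, L] using k.2
    · have hlt : a (2*m) < a (2*m+1) := hamono (Nat.lt_succ_self _)
      have hj1 := ((h (a (2*m))).resolve_left (hamem _)).extend
        (hseg _ _ hlt.le) (by
          simp only [disjoint_iUnion_left]; exact fun k _ => (hEl _ _).symm)
      have hj2 := (h (a (2*m+1))).resolve_left (hamem _)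
      have := J1_J1 (by
        rw [disjoint_union_left]; refine ⟨hE _ _ hlt.ne, ?_⟩
        simp only [disjoint_iUnion_left]; exact fun k _ => (hEl _ _).symm) (hT _ _ hlt.ne) hj1 hj2
      refine J0_sub this ?_ ?_
      · rintro e ((he | he) | he)
        · exact Or.inl (mem_iUnion₂_of_mem (i := a (2*m)) (by simp [S]) he)
        · exact Or.inr he
        · exact Or.inl (mem_iUnion₂_of_mem (i := a (2*m+1)) (by simp [S]) he)
      · simp only [S, Sum.elim_inr, biUnion_insert, biUnion_singleton]

end TJ


namespace TJ

open Set

universe u w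
variable {V : Type u}

/-- parent edges of vertices in `X` -/
def EX (d : V → ℕ) (par : V → V) (X : Set V) : Set (Sym2 V) :=
  {e | ∃ v ∈ X, 0 < d v ∧ e = s(v, par v)}

theorem EX_mono {d : V → ℕ} {par : V → V} {X Y : Set V} (h : X ⊆ Y) : EX d par X ⊆ EX d par Y := by
  rintro e ⟨v, hv, h1, h2⟩; exact ⟨v, h hv, h1, h2⟩

theorem EX_disj {d : V → ℕ} {par : V → V} (hpar : ∀ v, 0 < d v → d (par v) + 1 = d v)
    {X Y : Set V} (h : Disjoint X Y) : Disjoint (EX d par X) (EX d par Y) := by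
  rw [Set.disjoint_left]
  rintro e ⟨v, hv, h1, rfl⟩ ⟨w, hw, h2, h3⟩
  have e1 := hpar v h1
  have e2 := hpar w h2
  rw [Sym2.eq_iff] at h3
  rcases h3 with ⟨rfl, _⟩ | ⟨h3, h4⟩
  · exact Set.disjoint_left.1 h hv hw
  · rw [← h3] at e2; rw [h4] at e1; omega

/-- `w` is a descendant of `v`. -/
inductive Dsc (d : V → ℕ) (par : V → V) (v : V) : V → Prop
  | refl : Dsc d par v v
  | step (w : V) : 0 < d w → Dsc d par v (par w) → Dsc d par v w

section
variable {d : V → ℕ} {par : V → V} (hpar : ∀ v, 0 < d v → d (par v) + 1 = d v)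

theorem Dsc.eq_or_step {v w : V} (h : Dsc d par v w) :
    v = w ∨ (0 < d w ∧ Dsc d par v (par w)) := by
  cases h with
  | refl => exact Or.inl rfl
  | step _ h1 h2 => exact Or.inr ⟨h1, h2⟩

theorem Dsc.trans {a b c : V} (h : Dsc d par a b) (h' : Dsc d par b c) : Dsc d par a c := by
  induction h' with
  | refl => exact h
  | step w h1 _ ih => exact Dsc.step w h1 ih

theorem Dsc.eq_or_lt (hpar : ∀ v, 0 < d v → d (par v) + 1 = d v) {v w : V}
    (h : Dsc d par v w) : v = w ∨ d v < d w := by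
  induction h with
  | refl => exact Or.inl rfl
  | step w h1 _ ih =>
    right
    have := hpar w h1
    rcases ih with rfl | ih <;> omega

theorem Dsc.antisymm (hpar : ∀ v, 0 < d v → d (par v) + 1 = d v) {v w : V}
    (h : Dsc d par v w) (h' : Dsc d par w v) : v = w := by
  rcases h.eq_or_lt hpar with rfl | h1
  · rfl
  · rcases h'.eq_or_lt hpar with rfl | h2
    · rfl
    · omega

theorem Dsc.child {v w : V} (h : Dsc d par v w) :
    v = w ∨ ∃ c, 0 < d c ∧ par c = v ∧ Dsc d par c w := by
  induction h with
  | refl => exact Or.inl rfl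
  | step w h1 _ ih =>
    right
    rcases ih with rfl | ⟨c, hc, hc', hd⟩
    · exact ⟨w, h1, rfl, Dsc.refl⟩
    · exact ⟨c, hc, hc', Dsc.step w h1 hd⟩

theorem Dsc.linear (hpar : ∀ v, 0 < d v → d (par v) + 1 = d v) {a b w : V}
    (ha : Dsc d par a w) (hb : Dsc d par b w)
    (hab : d a ≤ d b) : Dsc d par a b := by
  induction hb with
  | refl => exact ha
  | step w h1 hb ih =>
    rcases ha.eq_or_step with rfl | ⟨_, h3⟩
    · have := hpar a h1
      rcases hb.eq_or_lt hpar with rfl | h <;> omega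
    · exact ih h3

/-- `v` is good: -/
def Good (d : V → ℕ) (par : V → V) (T : Set V) (v : V) : Prop :=
  J0 (EX d par ({u | Dsc d par v u} \ {v})) (T ∩ {u | Dsc d par v u}) ∨
    J1 (EX d par ({u | Dsc d par v u} \ {v})) (T ∩ {u | Dsc d par v u}) v

/-- `w` together with the subtrees at the children in `C`. -/
def Bag (d : V → ℕ) (par : V → V) (w : V) (C : Set V) : Set V :=
  {u | u = w ∨ ∃ c ∈ C, Dsc d par c u}

theorem bag_pool (hpar : ∀ v, 0 < d v → d (par v) + 1 = d v) {T : Set V} {w : V} {C : Set V}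
    (hC : ∀ c ∈ C, 0 < d c ∧ par c = w)
    (hg : ∀ c ∈ C, Good d par T c) :
    J0 (EX d par (Bag d par w C \ {w})) (T ∩ Bag d par w C) ∨
    J1 (EX d par (Bag d par w C \ {w})) (T ∩ Bag d par w C) w := by
  have hdc : ∀ c ∈ C, d w + 1 = d c := fun c hc => by
    have := hpar c (hC c hc).1; rw [(hC c hc).2] at this; exact this
  have hdis : ∀ c ∈ C, ∀ c' ∈ C, c ≠ c' → Disjoint {u | Dsc d par c u} {u | Dsc d par c' u} := by
    intro c hc c' hc' hne
    rw [Set.disjoint_left]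
    intro u hu hu'
    have h1 := hdc c hc
    have h2 := hdc c' hc'
    exact hne ((Dsc.linear hpar hu hu' (by omega)).antisymm hpar (Dsc.linear hpar hu' hu (by omega)))
  have hw : ∀ c ∈ C, ¬ Dsc d par c w := by
    intro c hc h
    have := hdc c hc
    rcases h.eq_or_lt hpar with rfl | h <;> omega
  have key := pool (ι := Option C) (v := w)
    (E := fun o => o.elim ∅ (fun c => EX d par {u | Dsc d par c.1 u}))
    (T := fun o => o.elim (T ∩ {w}) (fun c => T ∩ {u | Dsc d par c.1 u})) ?_ ?_ ?_
  · have eT : (⋃ i : Option C, (fun o : Option C => o.elim (T ∩ {w})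
        (fun c => T ∩ {u | Dsc d par c.1 u})) i) = T ∩ Bag d par w C := by
      ext x
      simp only [mem_iUnion, Option.exists, Option.elim_none, Option.elim_some, Bag, mem_inter_iff,
        mem_singleton_iff, mem_ofPred_eq, Subtype.exists, exists_prop]
      constructor
      · rintro (h | ⟨c, h1, h2, h3⟩)
        · exact ⟨h.1, Or.inl h.2⟩
        · exact ⟨h2, Or.inr ⟨c, h1, h3⟩⟩
      · rintro ⟨h1, h2 | ⟨c, h2, h3⟩⟩
        · exact Or.inl ⟨h1, h2⟩
        · exact Or.inr ⟨c, h2, h1, h3⟩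
    have eE : (⋃ i : Option C, (fun o : Option C => o.elim ∅
        (fun c => EX d par {u | Dsc d par c.1 u})) i) ⊆ EX d par (Bag d par w C \ {w}) := by
      intro e he
      obtain ⟨o, ho⟩ := mem_iUnion.1 he
      rcases o with _ | c
      · exact absurd ho (by simp)
      · refine EX_mono ?_ ho
        intro u hu
        exact ⟨Or.inr ⟨c.1, c.2, hu⟩, fun h => hw c.1 c.2 (h ▸ hu)⟩
    rw [eT] at key
    exact key.imp (fun h => h.mono eE) (fun h => h.mono eE)
  · rintro (_ | c) (_ | c') hne
    · exact absurd rfl hne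
    · simp
    · simp
    · exact EX_disj hpar (hdis _ c.2 _ c'.2 (fun h => hne (by rw [Subtype.ext h])))
  · rintro (_ | c) (_ | c') hne
    · exact absurd rfl hne
    · rw [Set.disjoint_left]
      rintro x ⟨_, rfl⟩ ⟨_, h⟩
      exact hw _ c'.2 h
    · rw [Set.disjoint_left]
      rintro x ⟨_, h⟩ ⟨_, rfl⟩
      exact hw _ c.2 h
    · exact (hdis _ c.2 _ c'.2 (fun h => hne (by rw [Subtype.ext h]))).mono inter_subset_right
        inter_subset_right
  · rintro (_ | c)
    · simp only [Option.elim_none]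
      by_cases hwT : w ∈ T
      · right
        refine ⟨w, ⟨hwT, rfl⟩, ∅, Subset.rfl, Conn.refl _, ?_⟩
        refine J0_sub (J0_empty _) Subset.rfl ?_
        ext x; simp
      · left
        refine J0_sub (J0_empty _) Subset.rfl ?_
        ext x; simp only [mem_empty_iff_false, mem_inter_iff, mem_singleton_iff, false_iff]
        rintro ⟨h, rfl⟩; exact hwT h
    · simp only [Option.elim_some]
      rcases hg c.1 c.2 with h | h
      · left; exact h.mono (EX_mono sdiff_subset)
      · right
        have hB : Conn (EX d par {c.1}) c.1 w :=
          Conn.edge ⟨c.1, rfl, (hC c.1 c.2).1, by rw [(hC c.1 c.2).2]⟩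
        refine (h.extend hB (EX_disj hpar disjoint_sdiff_right)).mono ?_
        refine union_subset (EX_mono sdiff_subset) (EX_mono ?_)
        rintro x rfl; exact Dsc.refl

/-- bad vertices all of whose ancestors are bad -/
inductive NN (d : V → ℕ) (par : V → V) (T : Set V) (r : V) : V → Prop
  | root : NN d par T r r
  | step (w : V) : 0 < d w → NN d par T r (par w) → ¬ Good d par T w → NN d par T r w

theorem NN.anc {T : Set V} {r : V} (hr : d r = 0) {v c : V} (h : NN d par T r v)
    (hc : Dsc d par c v) : NN d par T r c := by
  induction h with
  | root =>
    rcases hc.eq_or_step with rfl | ⟨h, _⟩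
    · exact NN.root
    · omega
  | step w h1 h2 h3 ih =>
    rcases hc.eq_or_step with rfl | ⟨h, h'⟩
    · exact NN.step _ h1 h2 h3
    · exact ih h'

theorem NN.bad {T : Set V} {r : V} (hbad : ¬ Good d par T r) {v : V} (h : NN d par T r v) :
    ¬ Good d par T v := by
  cases h with
  | root => exact hbad
  | step w h1 h2 h3 => exact h3

theorem NN.dsc {T : Set V} {r : V} {v : V} (h : NN d par T r v) : Dsc d par r v := by
  induction h with
  | root => exact Dsc.refl
  | step w h1 _ _ ih => exact Dsc.step w h1 ih

/-- vertices whose lowest `NN` ancestor is `w` -/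
def FN (d : V → ℕ) (par : V → V) (T : Set V) (r : V) (w : V) : Set V :=
  {u | Dsc d par w u ∧ ∀ v, NN d par T r v → Dsc d par v u → Dsc d par v w}

theorem FN_unique (hpar : ∀ v, 0 < d v → d (par v) + 1 = d v) {T : Set V} {r w w' x : V}
    (hw : NN d par T r w) (hw' : NN d par T r w')
    (h : x ∈ FN d par T r w) (h' : x ∈ FN d par T r w') : w = w' :=
  (h'.2 w hw h.1).antisymm hpar (h.2 w' hw' h'.1)

theorem FN_exists {T : Set V} {r x : V} (h : Dsc d par r x) :
    ∃ w, NN d par T r w ∧ x ∈ FN d par T r w := by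
  induction h with
  | refl => exact ⟨r, NN.root, Dsc.refl, fun _ _ h => h⟩
  | step w h1 _ ih =>
    by_cases hw : NN d par T r w
    · exact ⟨w, hw, Dsc.refl, fun _ _ h => h⟩
    · obtain ⟨a, ha, ha1, ha2⟩ := ih
      refine ⟨a, ha, Dsc.step w h1 ha1, fun v hv hvw => ?_⟩
      rcases hvw.eq_or_step with rfl | ⟨_, h⟩
      · exact absurd hv hw
      · exact ha2 v hv h

theorem FN_eq (hpar : ∀ v, 0 < d v → d (par v) + 1 = d v) {T : Set V} {r w : V} (hr : d r = 0)
    (hw : NN d par T r w) :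
    FN d par T r w = Bag d par w {c | (0 < d c ∧ par c = w) ∧ ¬ NN d par T r c} := by
  ext u
  constructor
  · rintro ⟨h1, h2⟩
    rcases h1.child with rfl | ⟨c, hc1, hc2, hc3⟩
    · exact Or.inl rfl
    · refine Or.inr ⟨c, ⟨⟨hc1, hc2⟩, fun hN => ?_⟩, hc3⟩
      have := hpar c hc1
      rw [hc2] at this
      rcases (h2 c hN hc3).eq_or_lt hpar with rfl | h <;> omega
  · rintro (rfl | ⟨c, ⟨⟨hc1, hc2⟩, hN⟩, hc3⟩)
    · exact ⟨Dsc.refl, fun _ _ h => h⟩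
    · refine ⟨(Dsc.step c hc1 (hc2 ▸ Dsc.refl)).trans hc3, fun v hv hvu => ?_⟩
      rcases le_total (d v) (d c) with h | h
      · rcases (Dsc.linear hpar hvu hc3 h).eq_or_step with rfl | ⟨_, h⟩
        · exact absurd hv hN
        · exact hc2 ▸ h
      · exact absurd (hv.anc hr (Dsc.linear hpar hc3 hvu h)) hN

theorem FN_pool (hpar : ∀ v, 0 < d v → d (par v) + 1 = d v) {T : Set V} {r w : V} (hr : d r = 0)
    (hw : NN d par T r w) :
    J0 (EX d par (FN d par T r w \ {w})) (T ∩ FN d par T r w) ∨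
    J1 (EX d par (FN d par T r w \ {w})) (T ∩ FN d par T r w) w := by
  rw [FN_eq hpar hr hw]
  apply bag_pool hpar
  · rintro c ⟨h, _⟩; exact h
  · rintro c ⟨⟨h1, h2⟩, h3⟩
    by_contra h
    exact h3 (NN.step c h1 (h2 ▸ hw) h)

/-- `NN` vertices whose own bag is not pairable -/
def N1 (d : V → ℕ) (par : V → V) (T : Set V) (r : V) (w : V) : Prop :=
  NN d par T r w ∧ ¬ J0 (EX d par (FN d par T r w \ {w})) (T ∩ FN d par T r w)

theorem good_of_children (hpar : ∀ v, 0 < d v → d (par v) + 1 = d v) {T : Set V} {w : V}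
    (h : ∀ c, 0 < d c → par c = w → Good d par T c) : Good d par T w := by
  have e : Bag d par w {c | 0 < d c ∧ par c = w} = {u | Dsc d par w u} := by
    ext u
    constructor
    · rintro (rfl | ⟨c, ⟨h1, h2⟩, h3⟩)
      · exact Dsc.refl
      · exact (Dsc.step c h1 (h2 ▸ Dsc.refl)).trans h3
    · intro h
      rcases h.child with rfl | ⟨c, hc1, hc2, hc3⟩
      · exact Or.inl rfl
      · exact Or.inr ⟨c, ⟨hc1, hc2⟩, hc3⟩
  have := bag_pool hpar (T := T) (w := w) (C := {c | 0 < d c ∧ par c = w}) (fun c hc => hc)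
    (fun c hc => h c hc.1 hc.2)
  rw [e] at this
  exact this

theorem exists_N1 (hpar : ∀ v, 0 < d v → d (par v) + 1 = d v) {T : Set V} {r c : V} (hr : d r = 0)
    (hbad : ¬ Good d par T r) (hc : NN d par T r c) :
    ∃ w, N1 d par T r w ∧ Dsc d par c w := by
  by_contra hno
  refine hc.bad hbad (Or.inl ?_)
  have hJ : ∀ w, NN d par T r w → Dsc d par c w →
      J0 (EX d par (FN d par T r w \ {w})) (T ∩ FN d par T r w) := by
    intro w hw hcw
    by_contra h
    exact hno ⟨w, ⟨hw, h⟩, hcw⟩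
  have hdis : ∀ i j : {w // NN d par T r w ∧ Dsc d par c w}, i ≠ j →
      Disjoint (FN d par T r i.1) (FN d par T r j.1) := by
    intro i j hij
    rw [Set.disjoint_left]
    intro x hx hx'
    exact hij (Subtype.ext (FN_unique hpar i.2.1 j.2.1 hx hx'))
  have := J0_iUnion (ι := {w // NN d par T r w ∧ Dsc d par c w})
    (E := fun w => EX d par (FN d par T r w.1 \ {w.1})) (T := fun w => T ∩ FN d par T r w.1)
    (fun i j hij => EX_disj hpar ((hdis i j hij).mono sdiff_subset sdiff_subset))
    (fun i j hij => (hdis i j hij).mono inter_subset_right inter_subset_right)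
    (fun i => hJ i.1 i.2.1 i.2.2)
  refine J0_sub this ?_ ?_
  · refine iUnion_subset fun i => EX_mono ?_
    rintro u ⟨⟨h1, h2⟩, h3⟩
    refine ⟨i.2.2.trans h1, ?_⟩
    rintro rfl
    exact h3 (i.2.2.antisymm hpar h1)
  · ext x
    simp only [mem_iUnion, mem_inter_iff, exists_and_left]
    refine and_congr_right fun _ => ?_
    constructor
    · rintro ⟨i, hi⟩
      exact i.2.2.trans hi.1
    · intro hx
      obtain ⟨w, hw, hxw⟩ := FN_exists (hc.dsc.trans hx)
      exact ⟨⟨w, hw, hxw.2 c hc hx⟩, hxw⟩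

theorem exists_pc (hpar : ∀ v, 0 < d v → d (par v) + 1 = d v) {T : Set V} {r : V} (hr : d r = 0)
    (hbad : ¬ Good d par T r) :
    ∃ pc : V → V, (∀ v, NN d par T r v → NN d par T r (pc v) ∧ 0 < d (pc v) ∧ par (pc v) = v) ∧
      ∀ v, NN d par T r v → ∃ k, N1 d par T r (pc^[k] v) := by
  classical
  let h : V → ℕ := fun v => sInf {n | ∃ w, N1 d par T r w ∧ Dsc d par v w ∧ d w = d v + n}
  have hne : ∀ v, NN d par T r v →
      {n | ∃ w, N1 d par T r w ∧ Dsc d par v w ∧ d w = d v + n}.Nonempty := by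
    intro v hv
    obtain ⟨w, hw, hvw⟩ := exists_N1 hpar hr hbad hv
    refine ⟨d w - d v, w, hw, hvw, ?_⟩
    rcases hvw.eq_or_lt hpar with rfl | h <;> omega
  have hex : ∀ v, ∃ c, NN d par T r v → (NN d par T r c ∧ 0 < d c ∧ par c = v) ∧
      ∀ c', NN d par T r c' → 0 < d c' → par c' = v → h c ≤ h c' := by
    intro v
    by_cases hv : NN d par T r v
    · have hch : {c | NN d par T r c ∧ 0 < d c ∧ par c = v}.Nonempty := by
        by_contra hno
        refine hv.bad hbad (good_of_children hpar fun c h1 h2 => ?_)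
        by_contra hb
        exact hno ⟨c, NN.step c h1 (h2 ▸ hv) hb, h1, h2⟩
      refine ⟨Function.argminOn h _ hch, fun _ => ⟨Function.argminOn_mem h _ hch, ?_⟩⟩
      intro c' h1 h2 h3
      exact Function.argminOn_le h _ (show c' ∈ {c | NN d par T r c ∧ 0 < d c ∧ par c = v} from
        ⟨h1, h2, h3⟩)
    · exact ⟨v, fun h => absurd h hv⟩
  choose pc hpc using hex
  refine ⟨pc, fun v hv => (hpc v hv).1, ?_⟩
  have main : ∀ n v, NN d par T r v → h v ≤ n → ∃ k, N1 d par T r (pc^[k] v) := by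
    intro n
    induction n with
    | zero =>
      intro v hv hn
      obtain ⟨w, hw, hvw, hd⟩ := Nat.sInf_mem (hne v hv)
      have h0 : h v = 0 := by omega
      have : d w = d v + h v := hd
      rcases hvw.eq_or_lt hpar with rfl | h
      · exact ⟨0, hw⟩
      · omega
    | succ n ih =>
      intro v hv hn
      obtain ⟨w, hw, hvw, hd⟩ := Nat.sInf_mem (hne v hv)
      have hd' : d w = d v + h v := hd
      rcases hvw.child with rfl | ⟨c, hc1, hc2, hc3⟩
      · exact ⟨0, hw⟩
      · have hNc := hw.1.anc hr hc3
        have h1 : h c ≤ n := by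
          have hp := hpar c hc1
          rw [hc2] at hp
          have : h c ≤ d w - d c := Nat.sInf_le ⟨w, hw, hc3, by
            rcases hc3.eq_or_lt hpar with rfl | h <;> omega⟩
          omega
        obtain ⟨⟨h2, h3, h4⟩, h5⟩ := hpc v hv
        obtain ⟨k, hk⟩ := ih (pc v) h2 ((h5 c hNc hc1 hc2).trans h1)
        exact ⟨k + 1, hk⟩
  exact fun v hv => main (h v) v hv le_rfl

theorem root_good (hpar : ∀ v, 0 < d v → d (par v) + 1 = d v) {T : Set V} {r : V} (hr : d r = 0) :
    Good d par T r := by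
  by_contra hbad
  obtain ⟨pc, hpc, hk⟩ := exists_pc hpar hr hbad
  have hNN : ∀ s k, NN d par T r s → NN d par T r (pc^[k] s) := by
    intro s k hs
    induction k with
    | zero => exact hs
    | succ k ih => rw [Function.iterate_succ_apply']; exact (hpc _ ih).1
  let St : Set V := {s | NN d par T r s ∧ ∀ v, NN d par T r v → pc v ≠ s}
  have hcover : ∀ n w, d w ≤ n → NN d par T r w → ∃ s ∈ St, ∃ k, pc^[k] s = w := by
    intro n
    induction n with
    | zero =>
      intro w hw hN
      refine ⟨w, ⟨hN, fun v hv h => ?_⟩, 0, rfl⟩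
      have := (hpc v hv).2.1
      rw [h] at this; omega
    | succ n ih =>
      intro w hw hN
      by_cases hs : w ∈ St
      · exact ⟨w, hs, 0, rfl⟩
      · have : ∃ v, NN d par T r v ∧ pc v = w := by
          by_contra hno
          exact hs ⟨hN, fun v hv h => hno ⟨v, hv, h⟩⟩
        obtain ⟨v, hv, rfl⟩ := this
        obtain ⟨_, h2, h3⟩ := hpc v hv
        have := hpar _ h2
        rw [h3] at this
        obtain ⟨s, hs, k, hk⟩ := ih v (by omega) hv
        exact ⟨s, hs, k + 1, by rw [Function.iterate_succ_apply', hk]⟩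
  have huniq : ∀ k k' s s', s ∈ St → s' ∈ St → pc^[k] s = pc^[k'] s' → k = k' ∧ s = s' := by
    intro k
    induction k with
    | zero =>
      intro k' s s' hs hs' h
      rcases k' with _ | k'
      · exact ⟨rfl, h⟩
      · rw [Function.iterate_succ_apply'] at h
        exact absurd h.symm (hs.2 _ (hNN _ _ hs'.1))
    | succ k ih =>
      intro k' s s' hs hs' h
      rcases k' with _ | k'
      · rw [Function.iterate_succ_apply'] at h
        exact absurd h (hs'.2 _ (hNN _ _ hs.1))
      · rw [Function.iterate_succ_apply', Function.iterate_succ_apply'] at h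
        have h2 := congrArg par h
        rw [(hpc _ (hNN _ _ hs.1)).2.2, (hpc _ (hNN _ _ hs'.1)).2.2] at h2
        obtain ⟨rfl, rfl⟩ := ih k' s s' hs hs' h2
        exact ⟨rfl, rfl⟩
  have hself : ∀ w, w ∈ FN d par T r w := fun w => ⟨Dsc.refl, fun _ _ h => h⟩
  have hFd : ∀ w w', NN d par T r w → NN d par T r w' → w ≠ w' →
      Disjoint (FN d par T r w) (FN d par T r w') := by
    intro w w' hw hw' hne
    rw [Set.disjoint_left]
    intro x hx hx'
    exact hne (FN_unique hpar hw hw' hx hx')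
  -- NN element in a bag
  have hNF : ∀ w x, NN d par T r x → x ∈ FN d par T r w → x = w := fun w x hx hxw =>
    (hxw.2 x hx Dsc.refl).antisymm hpar hxw.1
  let W : V → Set V := fun s => ⋃ k, FN d par T r (pc^[k] s)
  have hray : ∀ s ∈ St, J0 (EX d par (W s \ {s})) (T ∩ W s) := by
    intro s hs
    have hne : ∀ i j, i ≠ j → pc^[i] s ≠ pc^[j] s := fun i j hij h =>
      hij (huniq i j s s hs hs h).1
    have := ray (E := fun k => EX d par (FN d par T r (pc^[k] s) \ {pc^[k] s}))
      (l := fun k => EX d par {pc^[k+1] s}) (T := fun k => T ∩ FN d par T r (pc^[k] s))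
      (q := fun k => pc^[k] s) ?_ ?_ ?_ ?_ ?_ ?_ ?_
    · refine J0_sub this ?_ ?_
      · refine union_subset (iUnion_subset fun k => EX_mono ?_) (iUnion_subset fun k => EX_mono ?_)
        · rintro x ⟨hx, hx'⟩
          refine ⟨mem_iUnion_of_mem k hx, ?_⟩
          rintro rfl
          exact hx' (hNF _ _ hs.1 hx)
        · rintro x rfl
          refine ⟨mem_iUnion_of_mem (k+1) (hself _), fun h => ?_⟩
          exact hne (k+1) 0 (by omega) h
      · rw [← inter_iUnion]
    · intro i j hij
      exact EX_disj hpar ((hFd _ _ (hNN _ _ hs.1) (hNN _ _ hs.1) (hne i j hij)).mono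
        sdiff_subset sdiff_subset)
    · intro i j hij
      exact ((hFd _ _ (hNN _ _ hs.1) (hNN _ _ hs.1) (hne i j hij)).mono
        inter_subset_right inter_subset_right)
    · intro i j hij
      refine EX_disj hpar ?_
      rw [disjoint_singleton]
      exact hne _ _ (by omega)
    · intro i j
      refine EX_disj hpar ?_
      rw [disjoint_singleton_right]
      rintro ⟨h1, h2⟩
      exact h2 (hNF _ _ (hNN _ _ hs.1) h1)
    · intro k
      have hee : s(pc^[k+1] s, pc^[k] s) ∈ EX d par {pc^[k+1] s} := by
        refine ⟨pc^[k+1] s, rfl, ?_, ?_⟩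
        · rw [Function.iterate_succ_apply']
          exact (hpc _ (hNN _ _ hs.1)).2.1
        · rw [Function.iterate_succ_apply', (hpc _ (hNN _ _ hs.1)).2.2]
      exact (Conn.edge hee).symm
    · intro k
      exact FN_pool hpar hr (hNN _ _ hs.1)
    · intro n
      obtain ⟨k, hk⟩ := hk _ (hNN s n hs.1)
      refine ⟨k + n, by omega, ?_⟩
      rw [← Function.iterate_add_apply] at hk
      exact hk.2
  apply hbad
  left
  have hWd : ∀ s ∈ St, ∀ s' ∈ St, s ≠ s' → Disjoint (W s) (W s') := by
    intro s hs s' hs' hne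
    simp only [W, disjoint_iUnion_left, disjoint_iUnion_right]
    intro i j
    exact hFd _ _ (hNN _ _ hs.1) (hNN _ _ hs'.1) fun h => hne (huniq _ _ _ _ hs hs' h).2
  have := J0_iUnion (ι := St) (E := fun s => EX d par (W s.1 \ {s.1})) (T := fun s => T ∩ W s.1)
    (fun i j hij => EX_disj hpar ((hWd _ i.2 _ j.2 (fun h => hij (Subtype.ext h))).mono
      sdiff_subset sdiff_subset))
    (fun i j hij => (hWd _ i.2 _ j.2 (fun h => hij (Subtype.ext h))).mono
      inter_subset_right inter_subset_right) (fun i => hray i.1 i.2)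
  refine J0_sub this (iUnion_subset fun s => EX_mono ?_) ?_
  · rintro x ⟨hx, hx'⟩
    obtain ⟨k, hk⟩ := mem_iUnion.1 hx
    refine ⟨(hNN s.1 k s.2.1).dsc.trans hk.1, ?_⟩
    intro hxr
    rw [mem_singleton_iff] at hxr
    subst hxr
    have h1 := hNF _ _ NN.root hk
    rcases k with _ | k
    · exact hx' h1
    · rw [Function.iterate_succ_apply'] at h1
      have := (hpc _ (hNN s.1 k s.2.1)).2.1
      rw [← h1] at this
      omega
  · rw [← inter_iUnion]
    congr 1
    ext x
    constructor
    · intro hx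
      obtain ⟨s, hs⟩ := mem_iUnion.1 hx
      obtain ⟨k, hk⟩ := mem_iUnion.1 hs
      exact (hNN s.1 k s.2.1).dsc.trans hk.1
    · intro hx
      obtain ⟨w, hw, hxw⟩ := FN_exists (T := T) hx
      obtain ⟨s, hs, k, rfl⟩ := hcover _ w le_rfl hw
      exact mem_iUnion_of_mem ⟨s, hs⟩ (mem_iUnion_of_mem k hxw)

end

/-- distance predicate -/
def NS (E : Set (Sym2 V)) (r : V) : ℕ → V → Prop
  | 0, v => v = r
  | n + 1, v => ∃ u, NS E r n u ∧ s(v, u) ∈ E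

theorem star (E : Set (Sym2 V)) (r : V) (T : Set V) (hT : ∀ t ∈ T, Conn E r t) :
    J0 E T ∨ J1 E T r := by
  classical
  let d : V → ℕ := fun v => sInf {n | NS E r n v}
  have hd : ∀ v n, NS E r n v → d v ≤ n := fun v n h => Nat.sInf_le h
  have hex : ∀ v, ∃ u, 0 < d v → d u + 1 = d v ∧ s(v, u) ∈ E := by
    intro v
    by_cases hv : 0 < d v
    · have hmem : NS E r (d v) v := Nat.sInf_mem (Nat.nonempty_of_pos_sInf hv)
      obtain ⟨n, hn⟩ : ∃ n, d v = n + 1 := ⟨d v - 1, by omega⟩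
      rw [hn] at hmem
      obtain ⟨u, hu, hu'⟩ := hmem
      refine ⟨u, fun _ => ⟨?_, hu'⟩⟩
      have h1 := hd u n hu
      have h2 : NS E r (d u) u := Nat.sInf_mem (s := {n | NS E r n u}) ⟨n, hu⟩
      have h3 : d v ≤ d u + 1 := hd v _ ⟨u, h2, hu'⟩
      omega
    · exact ⟨v, fun h => absurd h hv⟩
  choose par hp using hex
  have hr : d r = 0 := Nat.le_zero.1 (hd r 0 rfl)
  have hpar : ∀ v, 0 < d v → d (par v) + 1 = d v := fun v hv => (hp v hv).1
  have hN : ∀ v, Conn E r v → ∃ n, NS E r n v := by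
    intro v hv
    induction hv with
    | refl => exact ⟨0, rfl⟩
    | tail _ h ih =>
      obtain ⟨n, hn⟩ := ih
      exact ⟨n + 1, _, hn, by rw [Sym2.eq_swap]; exact h⟩
  have hD : ∀ n v, d v ≤ n → Conn E r v → Dsc d par r v := by
    intro n
    induction n with
    | zero =>
      intro v hv hc
      have hm : NS E r (d v) v := Nat.sInf_mem (hN v hc)
      have h0 : d v = 0 := by omega
      rw [h0] at hm
      have : v = r := hm
      rw [this]; exact Dsc.refl
    | succ n ih =>
      intro v hv hc
      by_cases h0 : 0 < d v
      · have := hpar v h0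
        exact Dsc.step v h0 (ih _ (by omega) (hc.trans (Conn.edge (hp v h0).2)))
      · exact ih v (by omega) hc
  have hg := root_good hpar (T := T) hr
  have hEX : EX d par ({u | Dsc d par r u} \ {r}) ⊆ E := by
    rintro e ⟨v, _, h, rfl⟩
    exact (hp v h).2
  have hTT : T ∩ {u | Dsc d par r u} = T := inter_eq_left.2 fun t ht => hD _ t le_rfl (hT t ht)
  unfold Good at hg
  rw [hTT] at hg
  exact hg.imp (fun h => h.mono hEX) (fun h => h.mono hEX)

end TJ


namespace TJ

open Set

universe u w
variable {V : Type u}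

theorem J0.extract {E : Set (Sym2 V)} {T : Set V} (h : J0 E T) {t : V} (ht : t ∈ T) :
    ∃ s ∈ T, s ≠ t ∧ J0 E (T \ {t, s}) := by
  obtain ⟨P, h1, h2, h3⟩ := h
  obtain ⟨q, ⟨hq, hqt⟩, huniq⟩ := h3 t ht
  have main : ∀ s, s ∈ T → s ≠ t → ((q.1 = t ∧ q.2.1 = s) ∨ (q.1 = s ∧ q.2.1 = t)) →
      J0 E (T \ {t, s}) := by
    intro s hs hst hqs
    obtain ⟨q2, ⟨hq2, hqt2⟩, huniq2⟩ := h3 s hs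
    have hqq : q2 = q := (huniq2 q ⟨hq, by tauto⟩).symm
    subst hqq
    have hne : ∀ x ∈ P, x ≠ q2 → x.1 ≠ t ∧ x.1 ≠ s ∧ x.2.1 ≠ t ∧ x.2.1 ≠ s := by
      intro x hx hxq
      refine ⟨fun h => hxq (huniq x ⟨hx, Or.inl h⟩), fun h => hxq (huniq2 x ⟨hx, Or.inl h⟩),
        fun h => hxq (huniq x ⟨hx, Or.inr h⟩), fun h => hxq (huniq2 x ⟨hx, Or.inr h⟩)⟩
    refine ⟨P \ {q2}, ?_, ?_, ?_⟩
    · rintro x ⟨hx, hxq⟩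
      obtain ⟨a, b, c, d, e⟩ := h1 x hx
      obtain ⟨n1, n2, n3, n4⟩ := hne x hx hxq
      exact ⟨a, ⟨b, by simp [n1, n2]⟩, ⟨c, by simp [n3, n4]⟩, d, e⟩
    · rintro x ⟨hx, _⟩ y ⟨hy, _⟩ hxy
      exact h2 x hx y hy hxy
    · rintro v ⟨hv, hv'⟩
      simp only [mem_insert_iff, mem_singleton_iff, not_or] at hv'
      obtain ⟨x, ⟨hx, hxv⟩, hxu⟩ := h3 v hv
      refine ⟨x, ⟨⟨hx, ?_⟩, hxv⟩, fun y hy => hxu y ⟨hy.1.1, hy.2⟩⟩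
      rintro rfl
      rcases hqs with ⟨h, h'⟩ | ⟨h, h'⟩ <;> rw [h, h'] at hxv <;> tauto
  obtain ⟨a, b, c, _, _⟩ := h1 q hq
  rcases hqt with h | h
  · exact ⟨q.2.1, c, fun h' => a (h.trans h'.symm), main _ c (fun h' => a (h.trans h'.symm))
      (Or.inl ⟨h, rfl⟩)⟩
  · exact ⟨q.1, b, fun h' => a (h'.trans h.symm), main _ b (fun h' => a (h'.trans h.symm))
      (Or.inr ⟨rfl, h⟩)⟩

theorem J0.even {E : Set (Sym2 V)} : ∀ (n : ℕ) {T : Set V}, T.Finite → T.ncard ≤ n → J0 E T →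
    Even T.ncard := by
  intro n
  induction n using Nat.strong_induction_on with
  | _ n ih =>
    intro T hT hn h
    rcases T.eq_empty_or_nonempty with rfl | ⟨t, ht⟩
    · simp
    · obtain ⟨s, hs, hst, hJ⟩ := h.extract ht
      have hsub : ({t, s} : Set V) ⊆ T := by rintro x (rfl | rfl) <;> assumption
      have hc : ({t, s} : Set V).ncard = 2 := Set.ncard_pair hst.symm
      have hd := Set.ncard_sdiff_add_ncard_of_subset hsub hT
      have := ih (n - 1) (by
        have : 0 < T.ncard := (Set.ncard_pos hT).2 ⟨t, ht⟩
        omega) (hT.subset sdiff_subset) (by omega) hJ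
      rw [← hd, hc]
      exact this.add (by decide)

theorem even_J0 {A : Set (Sym2 V)} {S : Set V} {x0 : V} (hS : S.Finite) (he : Even S.ncard)
    (hc : ∀ x ∈ S, Conn A x0 x) : J0 A S := by
  rcases star A x0 S hc with h | ⟨τ, hτ, B, _, _, hJ⟩
  · exact h
  · have h1 := J0.even _ (hS.subset sdiff_subset) le_rfl hJ
    have h2 := Set.ncard_sdiff_singleton_add_one hτ hS
    rw [← h2] at he
    exact absurd he (Nat.not_even_iff_odd.2 h1.add_one)

theorem J0.hasTJoin {G : SimpleGraph V} {T : Set V} (h : J0 G.edgeSet T) : G.HasTJoin T := by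
  obtain ⟨P, h1, h2, h3⟩ := h
  have hw : ∀ q : P, ∃ x : G.Walk q.1.1 q.1.2.1, x.IsPath ∧ ∀ e ∈ x.edges, e ∈ q.1.2.2 :=
    fun q => conn_walk (h1 q.1 q.2).2.2.2.1 (h1 q.1 q.2).2.2.2.2
  choose x hx hx' using hw
  refine ⟨range fun q : P => ⟨q.1.1, q.1.2.1, x q⟩, ?_, ?_, ?_⟩
  · rintro _ ⟨q, rfl⟩
    exact ⟨hx q, (h1 q.1 q.2).1, (h1 q.1 q.2).2.1, (h1 q.1 q.2).2.2.1⟩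
  · rintro _ ⟨q, rfl⟩ _ ⟨q', rfl⟩ hne e he he'
    have hqq : q.1 ≠ q'.1 := fun h => hne (by rw [Subtype.ext h])
    exact Set.disjoint_left.1 (h2 _ q.2 _ q'.2 hqq) (hx' q e he) (hx' q' e he')
  · intro v hv
    obtain ⟨q, ⟨hq, hqv⟩, hu⟩ := h3 v hv
    refine ⟨⟨q.1, q.2.1, x ⟨q, hq⟩⟩, ⟨⟨⟨q, hq⟩, rfl⟩, hqv⟩, ?_⟩
    rintro _ ⟨⟨q', rfl⟩, hv'⟩
    have : q' = ⟨q, hq⟩ := Subtype.ext (hu q'.1 ⟨q'.2, hv'⟩)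
    subst this; rfl

/-- A family of edge-disjoint paths with a leftover vertex. -/
structure Fam (G : SimpleGraph V) (ι : Type w) where
  s : ι → V
  t : ι → V
  p : ∀ i, G.Walk (s i) (t i)
  r : V
  path : ∀ i, (p i).IsPath
  disj : ∀ i j, i ≠ j → ∀ e ∈ (p i).edges, e ∉ (p j).edges
  ne : ∀ i, s i ≠ t i
  ends_disj : ∀ i j, i ≠ j → s i ≠ s j ∧ s i ≠ t j ∧ t i ≠ t j
  rs : ∀ i, r ≠ s i
  rt : ∀ i, r ≠ t i

section
variable {G : SimpleGraph V} {ι : Type w}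

/-- edges of a path of the family -/
def Fam.pe (F : Fam G ι) (i : ι) : Set (Sym2 V) := {e | e ∈ (F.p i).edges}

/-- endpoints of the paths with index in `I` -/
def Fam.ends (F : Fam G ι) (I : Set ι) : Set V := {v | ∃ i ∈ I, v = F.s i ∨ v = F.t i}

theorem Fam.pe_finite (F : Fam G ι) (i : ι) : (F.pe i).Finite := List.finite_toSet _

theorem Fam.pe_sub (F : Fam G ι) (i : ι) : F.pe i ⊆ G.edgeSet := fun _ he =>
  (F.p i).edges_subset_edgeSet he

theorem Fam.pe_conn (F : Fam G ι) (i : ι) : Conn (F.pe i) (F.s i) (F.t i) :=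
  walk_conn (F.p i) fun _ h => h

theorem Fam.pe_disj (F : Fam G ι) {i j : ι} (h : i ≠ j) : Disjoint (F.pe i) (F.pe j) :=
  Set.disjoint_left.2 (F.disj i j h)

theorem Fam.end_inj (F : Fam G ι) {i j : ι} {v : V} (h : v = F.s i ∨ v = F.t i)
    (h' : v = F.s j ∨ v = F.t j) : i = j := by
  by_contra hij
  obtain ⟨a, b, c⟩ := F.ends_disj i j hij
  obtain ⟨a', b', c'⟩ := F.ends_disj j i (Ne.symm hij)
  rcases h with rfl | rfl <;> rcases h' with h' | h' <;> tauto

theorem Fam.r_ends (F : Fam G ι) (I : Set ι) : F.r ∉ F.ends I := by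
  rintro ⟨i, _, h | h⟩
  · exact F.rs i h
  · exact F.rt i h

/-- Valid states of the game. -/
structure Valid (F : Fam G ι) (R D : Set (Sym2 V)) (I : Set ι) (τ z : V) : Prop where
  Rfin : R.Finite
  Dfin : D.Finite
  RD : Disjoint R D
  RE : R ⊆ G.edgeSet
  DE : D ⊆ G.edgeSet
  Ifin : I.Finite
  τmem : τ ∈ insert F.r (F.ends I)
  conn : Conn D τ z
  free : ∀ i, i ∉ I → Disjoint (F.pe i) (R ∪ D)
  inf : {i | i ∉ I ∧ Conn (G.edgeSet \ (R ∪ D)) z (F.s i)}.Infinite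

/-- A legal move. -/
structure Move (F : Fam G ι) (R : Set (Sym2 V)) (I : Set ι) (τ : V)
    (R' D' : Set (Sym2 V)) (I' : Set ι) (τ' z' : V) : Prop where
  valid : Valid F R' D' I' τ' z'
  RR : R ⊆ R'
  II : I ⊆ I'
  τm : τ' ∈ F.ends (I' \ I)
  J : J0 (R' \ R) (insert τ (F.ends (I' \ I)) \ {τ'})

/-- There is a move. -/
def CanMove (F : Fam G ι) (R : Set (Sym2 V)) (I : Set ι) (τ : V) : Prop :=
  ∃ R' D' I' τ' z', Move F R I τ R' D' I' τ' z'

theorem Fam.ends_mono (F : Fam G ι) {I I' : Set ι} (h : I ⊆ I') : F.ends I ⊆ F.ends I' := by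
  rintro v ⟨i, hi, hv⟩; exact ⟨i, h hi, hv⟩

theorem Fam.ends_sdiff (F : Fam G ι) {I I' : Set ι} {v : V} (h : v ∈ F.ends (I' \ I)) :
    v ∉ F.ends I := by
  rintro ⟨j, hj, hv⟩
  obtain ⟨i, hi, hv'⟩ := h
  have := F.end_inj hv hv'
  subst this
  exact hi.2 hj

/-- union along an increasing sequence -/
theorem J0_chain {R : ℕ → Set (Sym2 V)} {Q : ℕ → Set V} (hR : Monotone R) (hQ : Monotone Q)
    (hQ0 : Q 0 = ∅) (h : ∀ n, J0 (R (n+1) \ R n) (Q (n+1) \ Q n)) : J0 (⋃ n, R n) (⋃ n, Q n) := by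
  have hdis : ∀ {X : Type u} (S : ℕ → Set X), Monotone S → ∀ i j, i ≠ j →
      Disjoint (S (i+1) \ S i) (S (j+1) \ S j) := by
    intro X S hS i j hij
    rw [Set.disjoint_left]
    rintro x ⟨h1, h2⟩ ⟨h3, h4⟩
    rcases lt_or_gt_of_ne hij with h | h
    · exact h4 (hS (show i + 1 ≤ j from h) h1)
    · exact h2 (hS (show j + 1 ≤ i from h) h3)
  refine J0_sub (J0_iUnion (hdis R hR) (hdis Q hQ) h) ?_ ?_
  · exact iUnion_subset fun n => sdiff_subset.trans (subset_iUnion R _)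
  · apply Subset.antisymm
    · exact iUnion_subset fun n => sdiff_subset.trans (subset_iUnion Q _)
    · refine iUnion_subset fun n => ?_
      induction n with
      | zero => rw [hQ0]; exact empty_subset _
      | succ n ih =>
        intro x hx
        by_cases hxn : x ∈ Q n
        · exact ih hxn
        · exact mem_iUnion_of_mem n ⟨hx, hxn⟩

theorem game (F : Fam G ι) [Infinite ι] (hG : G.Connected)
    (h : ∀ R D I τ z, Valid F R D I τ z → CanMove F R I τ) :
    J0 G.edgeSet (insert F.r (F.ends univ)) := by
  classical
  let S := {x : Set (Sym2 V) × Set (Sym2 V) × Set ι × V × V //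
    Valid F x.1 x.2.1 x.2.2.1 x.2.2.2.1 x.2.2.2.2}
  have hnext : ∀ x : S, ∃ y : S, Move F x.1.1 x.1.2.2.1 x.1.2.2.2.1
      y.1.1 y.1.2.1 y.1.2.2.1 y.1.2.2.2.1 y.1.2.2.2.2 := by
    rintro ⟨⟨R, D, I, τ, z⟩, hx⟩
    obtain ⟨R', D', I', τ', z', hm⟩ := h R D I τ z hx
    exact ⟨⟨⟨R', D', I', τ', z'⟩, hm.valid⟩, hm⟩
  choose next hnext using hnext
  have hinit : Valid F (∅ : Set (Sym2 V)) ∅ (∅ : Set ι) F.r F.r := by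
    refine ⟨finite_empty, finite_empty, disjoint_empty _, empty_subset _, empty_subset _,
      finite_empty,
      mem_insert _ _, Conn.refl _, fun _ _ => by simp, ?_⟩
    have : {i | i ∉ (∅ : Set ι) ∧ Conn (G.edgeSet \ (∅ ∪ ∅)) F.r (F.s i)} = univ := by
      ext i
      simp only [mem_empty_iff_false, not_false_eq_true, true_and, union_empty, sdiff_empty,
        mem_ofPred_eq, mem_univ, iff_true]
      obtain ⟨q⟩ := hG.preconnected F.r (F.s i)
      exact walk_conn q fun e he => q.edges_subset_edgeSet he
    rw [this]
    exact infinite_univ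
  let x : ℕ → S := fun n => Nat.rec ⟨⟨∅, ∅, ∅, F.r, F.r⟩, hinit⟩ (fun _ y => next y) n
  have hx0 : x 0 = ⟨⟨∅, ∅, ∅, F.r, F.r⟩, hinit⟩ := rfl
  have hxs : ∀ n, x (n+1) = next (x n) := fun n => rfl
  let R : ℕ → Set (Sym2 V) := fun n => (x n).1.1
  let I : ℕ → Set ι := fun n => (x n).1.2.2.1
  let τ : ℕ → V := fun n => (x n).1.2.2.2.1
  have hm : ∀ n, Move F (R n) (I n) (τ n) (R (n+1)) (x (n+1)).1.2.1 (I (n+1)) (τ (n+1))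
      (x (n+1)).1.2.2.2.2 := fun n => hnext (x n)
  have hv : ∀ n, Valid F (R n) (x n).1.2.1 (I n) (τ n) (x n).1.2.2.2.2 := fun n => (x n).2
  let Q : ℕ → Set V := fun n => insert F.r (F.ends (I n)) \ {τ n}
  have hτ : ∀ n, τ n ≠ τ (n+1) := by
    intro n hn
    have h1 := (hv n).τmem
    have h2 := (hm n).τm
    rw [hn] at h1
    rcases h1 with h1 | h1
    · rw [h1] at h2; exact F.r_ends _ h2
    · exact F.ends_sdiff h2 h1
  have hRm : Monotone R := monotone_nat_of_le_succ fun n => (hm n).RR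
  have hτ' : ∀ n, τ (n+1) ∉ insert F.r (F.ends (I n)) := by
    intro n hn
    rcases hn with h1 | h1
    · have h2 := (hm n).τm
      rw [h1] at h2; exact F.r_ends _ h2
    · exact F.ends_sdiff (hm n).τm h1
  have hQm : Monotone Q := by
    refine monotone_nat_of_le_succ fun n => ?_
    rintro v ⟨h1, h2⟩
    refine ⟨insert_subset_insert (F.ends_mono (hm n).II) h1, ?_⟩
    rintro rfl
    exact hτ' n h1
  have hQ0 : Q 0 = ∅ := by
    ext v
    simp [Q, I, τ, hx0, Fam.ends]
  have hQd : ∀ n, Q (n+1) \ Q n = insert (τ n) (F.ends (I (n+1) \ I n)) \ {τ (n+1)} := by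
    intro n
    ext v
    constructor
    · rintro ⟨⟨h1, h2⟩, h3⟩
      refine ⟨?_, h2⟩
      by_cases hvn : v = τ n
      · exact Or.inl hvn
      · right
        have h4 : v ∉ insert F.r (F.ends (I n)) := fun h => h3 ⟨h, hvn⟩
        rcases h1 with h1 | ⟨i, hi, hvi⟩
        · exact absurd (Or.inl h1) h4
        · exact ⟨i, ⟨hi, fun h => h4 (Or.inr ⟨i, h, hvi⟩)⟩, hvi⟩
    · rintro ⟨h1, h2⟩
      rcases h1 with rfl | h1
      · exact ⟨⟨insert_subset_insert (F.ends_mono (hm n).II) (hv n).τmem, h2⟩, fun h => h.2 rfl⟩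
      · refine ⟨⟨Or.inr (F.ends_mono sdiff_subset h1), h2⟩, ?_⟩
        rintro ⟨h3 | h3, _⟩
        · rw [h3] at h1; exact F.r_ends _ h1
        · exact F.ends_sdiff h1 h3
  have h1 : J0 (⋃ n, R n) (⋃ n, Q n) := by
    refine J0_chain hRm hQm hQ0 fun n => ?_
    rw [hQd]; exact (hm n).J
  have hQQ : (⋃ n, Q n) = insert F.r (F.ends (⋃ n, I n)) := by
    have aux : ∀ n, insert F.r (F.ends (I n)) ⊆ Q n ∪ Q (n+1) := by
      intro n v hvn
      by_cases h : v = τ n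
      · right
        refine ⟨insert_subset_insert (F.ends_mono (hm n).II) hvn, ?_⟩
        rw [h]; exact hτ n
      · exact Or.inl ⟨hvn, h⟩
    have aux' : ∀ n, insert F.r (F.ends (I n)) ⊆ ⋃ n, Q n := fun n =>
      (aux n).trans (union_subset (subset_iUnion Q n) (subset_iUnion Q (n+1)))
    apply Subset.antisymm
    · refine iUnion_subset fun n => sdiff_subset.trans (insert_subset_insert
        (F.ends_mono (subset_iUnion I n)))
    · rintro v (rfl | ⟨i, hi, hvi⟩)
      · exact aux' 0 (mem_insert _ _)
      · obtain ⟨n, hn⟩ := mem_iUnion.1 hi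
        exact aux' n (Or.inr ⟨i, hn, hvi⟩)
  rw [hQQ] at h1
  have h2 := J0_iUnion (ι := {i // i ∉ ⋃ n, I n}) (E := fun i => F.pe i.1)
    (T := fun i => {F.s i.1, F.t i.1}) (fun i j hij => F.pe_disj (fun h => hij (Subtype.ext h)))
    (by
      intro i j hij
      rw [Set.disjoint_left]
      intro v hv hv'
      exact hij (Subtype.ext (F.end_inj hv hv')))
    (fun i => J0_pair (F.ne _) (F.pe_conn _))
  refine J0_sub (J0_union ?_ ?_ h1 h2) ?_ ?_
  · simp only [disjoint_iUnion_left, disjoint_iUnion_right]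
    intro i n
    have hi : i.1 ∉ I n := fun h => i.2 (mem_iUnion_of_mem n h)
    exact ((hv n).free i.1 hi).symm.mono_left subset_union_left
  · rw [Set.disjoint_left]
    intro v hv hv'
    obtain ⟨i, hi⟩ := mem_iUnion.1 hv'
    rcases hv with rfl | ⟨j, hj, hvj⟩
    · rcases hi with hi | hi
      · exact F.rs _ hi
      · exact F.rt _ hi
    · exact i.2 (F.end_inj hvj hi ▸ hj)
  · exact union_subset (iUnion_subset fun n => (hv n).RE) (iUnion_subset fun i => F.pe_sub _)
  · ext v
    constructor
    · rintro (h | h)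
      · exact insert_subset_insert (F.ends_mono (subset_univ _)) h
      · obtain ⟨i, hi⟩ := mem_iUnion.1 h
        exact Or.inr ⟨i.1, mem_univ _, hi⟩
    · rintro (rfl | ⟨i, _, hvi⟩)
      · exact Or.inl (mem_insert _ _)
      · by_cases hi : i ∈ ⋃ n, I n
        · exact Or.inl (Or.inr ⟨i, hi, hvi⟩)
        · exact Or.inr (mem_iUnion_of_mem ⟨i, hi⟩ hvi)

end

end TJ


namespace TJ

open Set

universe u w
variable {V : Type u}

section
variable {G : SimpleGraph V} {ι : Type w}

/-- edge set of a walk -/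
def we {a b : V} (q : G.Walk a b) : Set (Sym2 V) := {e | e ∈ q.edges}

theorem we_finite {a b : V} (q : G.Walk a b) : (we q).Finite := List.finite_toSet _

theorem supp_finite {a b : V} (q : G.Walk a b) : {v | v ∈ q.support}.Finite := List.finite_toSet _

theorem supp_conn {a b v : V} (q : G.Walk a b) (hv : v ∈ q.support) : Conn (we q) a v := by
  classical
  exact walk_conn (q.takeUntil v hv) fun e he => q.edges_takeUntil_subset_edges hv he

theorem supp_conn' {a b v : V} (q : G.Walk a b) (hv : v ∈ q.support) : Conn (we q) v b := by
  classical
  exact walk_conn (q.dropUntil v hv) fun e he => q.edges_dropUntil_subset_edges hv he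

theorem we_fst {a b x y : V} (q : G.Walk a b) (h : s(x, y) ∈ we q) : x ∈ q.support :=
  q.fst_mem_support_of_mem_edges h

theorem we_snd {a b x y : V} (q : G.Walk a b) (h : s(x, y) ∈ we q) : y ∈ q.support :=
  q.snd_mem_support_of_mem_edges h

theorem split {s t : V} (q : G.Walk s t) (hq : q.IsPath) {x y : V} (hx : x ∈ q.support)
    (hy : y ∈ q.support) : ∃ a a' A1 A2, ((a = s ∧ a' = t) ∨ (a = t ∧ a' = s)) ∧
      A1 ⊆ we q ∧ A2 ⊆ we q ∧ Disjoint A1 A2 ∧ Conn A1 x a ∧ Conn A2 y a' := by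
  classical
  have hspec := q.take_spec hx
  have hnd := hq.isTrail.edges_nodup
  have hd : Disjoint (we (q.takeUntil x hx)) (we (q.dropUntil x hx)) := by
    rw [← hspec, SimpleGraph.Walk.edges_append] at hnd
    rw [Set.disjoint_left]
    intro e he he'
    exact List.disjoint_of_nodup_append hnd he he'
  have hy' : y ∈ (q.takeUntil x hx).support ∨ y ∈ (q.dropUntil x hx).support := by
    rw [← SimpleGraph.Walk.mem_support_append_iff, hspec]; exact hy
  rcases hy' with hy' | hy'
  · exact ⟨t, s, we (q.dropUntil x hx), we (q.takeUntil x hx), Or.inr ⟨rfl, rfl⟩,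
      fun e he => q.edges_dropUntil_subset_edges hx he, fun e he => q.edges_takeUntil_subset_edges hx he,
      hd.symm, walk_conn _ fun e he => he, (supp_conn _ hy').symm⟩
  · exact ⟨s, t, we (q.takeUntil x hx), we (q.dropUntil x hx), Or.inl ⟨rfl, rfl⟩,
      fun e he => q.edges_takeUntil_subset_edges hx he, fun e he => q.edges_dropUntil_subset_edges hx he,
      hd, (walk_conn _ fun e he => he).symm, supp_conn' _ hy'⟩

theorem peel {E E' : Set (Sym2 V)} {S : Set V} {a b : V} (h : Conn E a b) (hb : b ∈ S)
    (hS : ∀ x y, s(x, y) ∈ E → s(x, y) ∉ E' → x ∈ S) : ∃ y ∈ S, Conn E' a y := by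
  induction h using Relation.ReflTransGen.head_induction_on with
  | refl => exact ⟨b, hb, Conn.refl _⟩
  | @head a c h1 _ ih =>
    by_cases he : s(a, c) ∈ E'
    · obtain ⟨y, hy, hc⟩ := ih
      exact ⟨y, hy, (Conn.edge he).trans hc⟩
    · exact ⟨a, hS a c h1 he, Conn.refl _⟩

theorem pigeon {X : Type*} {Y : Type*} {N : Set X} (hN : N.Infinite) {S : Set Y} (hS : S.Finite)
    {r : X → Y → Prop} (h : ∀ j ∈ N, ∃ y ∈ S, r j y) : ∃ y ∈ S, {j | j ∈ N ∧ r j y}.Infinite := by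
  by_contra hno
  push Not at hno
  refine hN (Set.Finite.subset (Set.Finite.biUnion hS (t := fun y => {j | j ∈ N ∧ r j y}) ?_) ?_)
  · intro y hy
    exact hno y hy
  · intro j hj
    obtain ⟨y, hy, hr⟩ := h j hj
    exact mem_iUnion₂_of_mem hy ⟨hj, hr⟩

theorem Fam.ends_finite (F : Fam G ι) {I : Set ι} (h : I.Finite) : (F.ends I).Finite := by
  refine ((h.image F.s).union (h.image F.t)).subset ?_
  rintro v ⟨i, hi, rfl | rfl⟩
  · exact Or.inl ⟨i, hi, rfl⟩
  · exact Or.inr ⟨i, hi, rfl⟩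

theorem Fam.ends_J0 (F : Fam G ι) (I : Set ι) : J0 (⋃ i : I, F.pe i.1) (F.ends I) := by
  have h2 := J0_iUnion (ι := I) (E := fun i => F.pe i.1)
    (T := fun i => {F.s i.1, F.t i.1}) (fun i j hij => F.pe_disj (fun h => hij (Subtype.ext h)))
    (by
      intro i j hij
      rw [Set.disjoint_left]
      intro v hv hv'
      exact hij (Subtype.ext (F.end_inj hv hv')))
    (fun i => J0_pair (F.ne _) (F.pe_conn _))
  refine J0_sub h2 Subset.rfl ?_
  ext v
  simp only [mem_iUnion, mem_insert_iff, mem_singleton_iff, Fam.ends, mem_ofPred_eq,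
    Subtype.exists, exists_prop]

theorem claimM (F : Fam G ι) {R D : Set (Sym2 V)} {I : Set ι} {τ z : V}
    (hv : Valid F R D I τ z) {i : ι} (hi : i ∉ I) {x : V} (hx : x ∈ (F.p i).support)
    (W : G.Walk z x) (hW : we W ⊆ G.edgeSet \ (R ∪ D)) (hWp : ∀ j, j ∉ I → Disjoint (F.pe j) (we W))
    (hc : Conn ((G.edgeSet \ (R ∪ D)) \ we W) z x) : CanMove F R I τ := by
  classical
  set E' := G.edgeSet \ (R ∪ D) with hE'
  set E2 := (E' \ we W) \ F.pe i with hE2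
  have hpe : ∀ j, j ∉ I → F.pe j ⊆ E' := fun j hj e he =>
    ⟨F.pe_sub j he, Set.disjoint_left.1 (hv.free j hj) he⟩
  have hτi : ∀ a, (a = F.s i ∨ a = F.t i) → τ ≠ a := by
    rintro a ha rfl
    rcases hv.τmem with h | ⟨j, hj, h⟩
    · rcases ha with ha | ha
      · exact F.rs i (h.symm.trans ha)
      · exact F.rt i (h.symm.trans ha)
    · exact hi (F.end_inj ha h ▸ hj)
  have hNinf : {j | j ∉ I ∧ j ≠ i ∧ Conn E' z (F.s j)}.Infinite := by
    refine (hv.inf.sdiff (finite_singleton i)).mono ?_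
    rintro j ⟨⟨h1, h2⟩, h3⟩
    exact ⟨h1, h3, h2⟩
  have hE'2 : ∀ x y, s(x, y) ∈ E' → s(x, y) ∉ E2 →
      x ∈ {v | v ∈ W.support} ∪ {v | v ∈ (F.p i).support} := by
    intro x y h h'
    by_cases hw : s(x, y) ∈ we W
    · exact Or.inl (we_fst W hw)
    · by_cases hp : s(x, y) ∈ F.pe i
      · exact Or.inr (we_fst (F.p i) hp)
      · exact absurd ⟨⟨h, hw⟩, hp⟩ h'
  obtain ⟨y, hy, hyinf⟩ := pigeon hNinf
    ((supp_finite W).union (supp_finite (F.p i))) (r := fun j y => Conn E2 (F.s j) y)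
    (fun j hj => peel hj.2.2.symm (Or.inl W.start_mem_support) hE'2)
  by_cases hcase : ∃ y ∈ (F.p i).support,
      {j | (j ∉ I ∧ j ≠ i ∧ Conn E' z (F.s j)) ∧ Conn E2 (F.s j) y}.Infinite
  · clear hy hyinf
    obtain ⟨y, hy, hyinf⟩ := hcase
    obtain ⟨a, a', A1, A2, haa, hA1, hA2, hA, hc1, hc2⟩ := split (F.p i) (F.path i) hx hy
    have hA1' : A1 ⊆ F.pe i := hA1
    have hA2' : A2 ⊆ F.pe i := hA2
    have hae : a = F.s i ∨ a = F.t i := by tauto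
    have hae' : a' = F.s i ∨ a' = F.t i := by tauto
    have hne : a ≠ a' := by
      have := F.ne i
      rcases haa with ⟨rfl, rfl⟩ | ⟨rfl, rfl⟩
      · exact this
      · exact this.symm
    have hcov : (R ∪ D ∪ we W ∪ (F.pe i \ A2)) ∪ A2 ⊆ R ∪ D ∪ we W ∪ F.pe i := by
      rintro e ((h | h) | h)
      · exact Or.inl h
      · exact Or.inr h.1
      · exact Or.inr (hA2' h)
    have hIdiff : insert i I \ I = {i} := by
      ext j; constructor
      · rintro ⟨rfl | h, h'⟩
        · rfl
        · exact absurd h h'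
      · rintro rfl; exact ⟨Or.inl rfl, hi⟩
    refine ⟨R ∪ D ∪ we W ∪ (F.pe i \ A2), A2, insert i I, a', y, ?_⟩
    refine ⟨⟨?_, ?_, ?_, ?_, ?_, ?_, ?_, ?_, ?_, ?_⟩, ?_, ?_, ?_, ?_⟩
    · exact (((hv.Rfin.union hv.Dfin).union (we_finite W)).union
        ((F.pe_finite i).subset sdiff_subset))
    · exact (F.pe_finite i).subset hA2'
    · rw [Set.disjoint_left]
      rintro e ((h | h) | h) he
      · exact (hpe i hi (hA2' he)).2 h
      · exact Set.disjoint_left.1 (hWp i hi) (hA2' he) h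
      · exact h.2 he
    · rintro e (((h | h) | h) | h)
      · exact hv.RE h
      · exact hv.DE h
      · exact (hW h).1
      · exact F.pe_sub i h.1
    · exact hA2'.trans (F.pe_sub i)
    · exact hv.Ifin.insert i
    · exact Or.inr ⟨i, mem_insert _ _, hae'⟩
    · exact hc2.symm
    · intro j hj
      simp only [mem_insert_iff, not_or] at hj
      refine Disjoint.mono_right hcov ?_
      rw [disjoint_union_right, disjoint_union_right]
      exact ⟨⟨hv.free j hj.2, hWp j hj.2⟩, F.pe_disj hj.1⟩
    · refine hyinf.mono ?_
      rintro j ⟨⟨h1, h2, h3⟩, h4⟩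
      refine ⟨fun h => h.elim h2 h1, h4.symm.mono ?_⟩
      rintro e ⟨⟨⟨h5, h6⟩, h7⟩, h8⟩
      refine ⟨h5, fun h => ?_⟩
      rcases hcov h with (h | h) | h
      · exact h6 h
      · exact h7 h
      · exact h8 h
    · exact fun e he => Or.inl (Or.inl (Or.inl he))
    · exact subset_insert _ _
    · rw [hIdiff]; exact ⟨i, rfl, hae'⟩
    · rw [hIdiff]
      refine J0_sub (J0_pair (s := τ) (t := a) (hτi a hae) ?_) Subset.rfl ?_
      · refine ((hv.conn.mono ?_).trans ((supp_conn W W.end_mem_support).mono ?_)).trans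
          (hc1.mono ?_)
        · intro e he
          exact ⟨Or.inl (Or.inl (Or.inr he)), fun h => Set.disjoint_left.1 hv.RD h he⟩
        · intro e he
          exact ⟨Or.inl (Or.inr he), fun h => (hW he).2 (Or.inl h)⟩
        · intro e he
          exact ⟨Or.inr ⟨hA1' he, fun h => Set.disjoint_left.1 hA he h⟩,
            fun h => (hpe i hi (hA1' he)).2 (Or.inl h)⟩
      · ext v
        have h1 := hτi a' hae'
        simp only [Fam.ends, mem_sdiff, mem_insert_iff, mem_singleton_iff, mem_ofPred_eq,
          exists_eq_left]
        constructor
        · rintro (rfl | rfl)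
          · exact ⟨Or.inl rfl, h1⟩
          · exact ⟨Or.inr hae, hne⟩
        · rintro ⟨h2 | h2, h3⟩
          · exact Or.inl h2
          · right
            rcases haa with ⟨rfl, rfl⟩ | ⟨rfl, rfl⟩ <;> tauto
  · -- second case
    have hyp : y ∉ (F.p i).support := fun h => hcase ⟨y, h, hyinf⟩
    have hyW : y ∈ W.support := hy.resolve_right hyp
    obtain ⟨y', hy', hcy'⟩ := peel (E' := E2) (S := {v | v ∈ (F.p i).support}) hc hx (by
      intro a b h h'
      by_cases hp : s(a, b) ∈ F.pe i
      · exact we_fst (F.p i) hp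
      · exact absurd ⟨h, hp⟩ h')
    have hzy : ¬ Conn E2 z y := by
      intro h
      refine hcase ⟨y', hy', hyinf.mono ?_⟩
      rintro j ⟨h1, h2⟩
      exact ⟨h1, (h2.trans h.symm).trans hcy'⟩
    obtain ⟨W2, _, hW2⟩ := conn_walk (G := G) (fun e he => he.1.1.1) hcy'
    have hW2' : we W2 ⊆ E2 := hW2
    let J : Set ι := {j | j ∉ I ∧ j ≠ i ∧ ∃ e ∈ we W2, e ∈ F.pe j}
    have hJfin : J.Finite := by
      refine Set.Finite.subset (Set.Finite.biUnion (we_finite W2) (t := fun e => {j | e ∈ F.pe j})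
        ?_) ?_
      · intro e _
        refine Set.Subsingleton.finite ?_
        intro j hj j' hj'
        by_contra hne
        exact Set.disjoint_left.1 (F.pe_disj hne) hj hj'
      · rintro j ⟨_, _, e, he, he'⟩
        exact mem_iUnion₂_of_mem he he'
    obtain ⟨a, a', A1, A2, haa, hA1, hA2, hA, hc1, hc2⟩ := split (F.p i) (F.path i) hy' hx
    have hA1' : A1 ⊆ F.pe i := hA1
    have hA2' : A2 ⊆ F.pe i := hA2
    have hae : a = F.s i ∨ a = F.t i := by tauto
    have hae' : a' = F.s i ∨ a' = F.t i := by tauto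
    have hne : a ≠ a' := by
      have := F.ne i
      rcases haa with ⟨rfl, rfl⟩ | ⟨rfl, rfl⟩
      · exact this
      · exact this.symm
    let PJ : Set (Sym2 V) := ⋃ j ∈ J, F.pe j
    have hPJ : ∀ e ∈ PJ, ∃ j ∈ J, e ∈ F.pe j := fun e he => by
      obtain ⟨j, hj, h⟩ := mem_iUnion₂.1 he; exact ⟨j, hj, h⟩
    have hcov : (R ∪ D ∪ we W2 ∪ PJ ∪ (F.pe i \ A2)) ∪ (we W ∪ A2) ⊆
        (R ∪ D ∪ we W ∪ F.pe i) ∪ (we W2 ∪ PJ) := by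
      rintro e ((((h | h) | h) | h) | (h | h))
      · exact Or.inl (Or.inl (Or.inl h))
      · exact Or.inr (Or.inl h)
      · exact Or.inr (Or.inr h)
      · exact Or.inl (Or.inr h.1)
      · exact Or.inl (Or.inl (Or.inr h))
      · exact Or.inl (Or.inr (hA2' h))
    have hIdiff : insert i (I ∪ J) \ I = insert i J := by
      ext j; constructor
      · rintro ⟨rfl | h | h, h'⟩
        · exact Or.inl rfl
        · exact absurd h h'
        · exact Or.inr h
      · rintro (rfl | h)
        · exact ⟨Or.inl rfl, hi⟩
        · exact ⟨Or.inr (Or.inr h), h.1⟩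
    have hpeJ : ∀ j ∈ J, F.pe j ⊆ E2 := fun j hj e he =>
      ⟨⟨hpe j hj.1 he, Set.disjoint_left.1 (hWp j hj.1) he⟩,
        Set.disjoint_left.1 (F.pe_disj hj.2.1) he⟩
    have hJconn : ∀ j ∈ J, ∀ v ∈ (F.p j).support, Conn (we W2 ∪ F.pe j) z v := by
      rintro j ⟨_, _, e, he, he'⟩ v hvj
      induction e with
      | _ b c =>
        refine ((supp_conn W2 (we_fst W2 he)).mono subset_union_left).trans ?_
        exact ((((supp_conn (F.p j) (we_fst (F.p j) he')).symm).trans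
          (supp_conn (F.p j) hvj)).mono subset_union_right)
    have hDR : Conn ((R ∪ D ∪ we W2 ∪ PJ ∪ (F.pe i \ A2)) \ R) τ z := by
      refine Conn.mono ?_ hv.conn
      intro e he
      exact ⟨Or.inl (Or.inl (Or.inl (Or.inr he))), fun h => Set.disjoint_left.1 hv.RD h he⟩
    have hW2R : we W2 ⊆ (R ∪ D ∪ we W2 ∪ PJ ∪ (F.pe i \ A2)) \ R := fun e he =>
      ⟨Or.inl (Or.inl (Or.inr he)), fun h => (hW2' he).1.1.2 (Or.inl h)⟩
    refine ⟨R ∪ D ∪ we W2 ∪ PJ ∪ (F.pe i \ A2), we W ∪ A2, insert i (I ∪ J), a', y, ?_⟩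
    refine ⟨⟨?_, ?_, ?_, ?_, ?_, ?_, ?_, ?_, ?_, ?_⟩, ?_, ?_, ?_, ?_⟩
    · exact ((((hv.Rfin.union hv.Dfin).union (we_finite W2)).union
        (hJfin.biUnion fun j _ => F.pe_finite j)).union ((F.pe_finite i).subset sdiff_subset))
    · exact (we_finite W).union ((F.pe_finite i).subset hA2')
    · rw [Set.disjoint_left]
      rintro e (((h | h) | h) | h) (he | he)
      · exact (hW he).2 h
      · exact (hpe i hi (hA2' he)).2 h
      · exact (hW2' h).1.2 he
      · exact (hW2' h).2 (hA2' he)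
      · obtain ⟨j, hj, hej⟩ := hPJ e h
        exact (hpeJ j hj hej).1.2 he
      · obtain ⟨j, hj, hej⟩ := hPJ e h
        exact (hpeJ j hj hej).2 (hA2' he)
      · exact Set.disjoint_left.1 (hWp i hi) h.1 he
      · exact h.2 he
    · rintro e ((((h | h) | h) | h) | h)
      · exact hv.RE h
      · exact hv.DE h
      · exact (hW2' h).1.1.1
      · obtain ⟨j, hj, hej⟩ := hPJ e h
        exact F.pe_sub j hej
      · exact F.pe_sub i h.1
    · exact union_subset (fun e he => (hW he).1) (hA2'.trans (F.pe_sub i))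
    · exact (hv.Ifin.union hJfin).insert i
    · exact Or.inr ⟨i, mem_insert _ _, hae'⟩
    · exact (hc2.symm.mono subset_union_right).trans
        ((supp_conn' W hyW).symm.mono subset_union_left)
    · intro j hj
      simp only [mem_insert_iff, mem_union, not_or] at hj
      refine Disjoint.mono_right hcov ?_
      simp only [disjoint_union_right]
      refine ⟨⟨⟨disjoint_union_right.1 (hv.free j hj.2.1), hWp j hj.2.1⟩, F.pe_disj hj.1⟩, ?_, ?_⟩
      · rw [Set.disjoint_left]
        intro e he he'
        exact hj.2.2 ⟨hj.2.1, hj.1, e, he', he⟩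
      · simp only [PJ, disjoint_iUnion_right]
        intro j' hj'
        refine F.pe_disj ?_
        rintro rfl
        exact hj.2.2 hj'
    · refine (hyinf.sdiff hJfin).mono ?_
      rintro j ⟨⟨⟨h1, h2, h3⟩, h4⟩, h5⟩
      refine ⟨fun h => h.elim h2 (fun h => h.elim h1 h5), ?_⟩
      have := Conn.avoid (E := E2) (X := we W2 ∪ PJ) (z := z) (x := y) ?_ hzy h4.symm
      · refine this.mono ?_
        rintro e ⟨⟨⟨⟨h6, h7⟩, h8⟩, h9⟩, h10⟩
        refine ⟨h6, fun h => ?_⟩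
        rcases hcov h with ((h | h) | h) | h
        · exact h7 h
        · exact h8 h
        · exact h9 h
        · exact h10 h
      · rintro b c (h | h)
        · exact (supp_conn W2 (we_fst W2 h)).mono hW2'
        · obtain ⟨j', hj', hej⟩ := hPJ _ h
          exact (hJconn j' hj' b (we_fst (F.p j') hej)).mono (union_subset hW2' (hpeJ j' hj'))
    · exact fun e he => Or.inl (Or.inl (Or.inl (Or.inl he)))
    · exact fun j hj => Or.inr (Or.inl hj)
    · rw [hIdiff]; exact ⟨i, Or.inl rfl, hae'⟩
    · rw [hIdiff]
      have hset : insert τ (F.ends (insert i J)) \ {a'} = {τ, a} ∪ F.ends J := by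
        ext v
        constructor
        · rintro ⟨rfl | ⟨j, rfl | hj, hvj⟩, h'⟩
          · exact Or.inl (Or.inl rfl)
          · left; right
            rw [mem_singleton_iff] at h' ⊢
            rcases haa with ⟨rfl, rfl⟩ | ⟨rfl, rfl⟩ <;> tauto
          · exact Or.inr ⟨j, hj, hvj⟩
        · rintro ((rfl | rfl) | ⟨j, hj, hvj⟩)
          · exact ⟨Or.inl rfl, hτi a' hae'⟩
          · exact ⟨Or.inr ⟨i, Or.inl rfl, hae⟩, hne⟩
          · refine ⟨Or.inr ⟨j, Or.inr hj, hvj⟩, ?_⟩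
            rintro rfl
            exact hj.2.1 (F.end_inj hvj hae')
      rw [hset]
      have hfinE := F.ends_finite hJfin
      refine even_J0 (x0 := τ) ((Set.toFinite _).union hfinE) ?_ ?_
      · have hd : Disjoint ({τ, a} : Set V) (F.ends J) := by
          rw [Set.disjoint_left]
          rintro v (rfl | rfl) ⟨j, hj, hvj⟩
          · rcases hv.τmem with h | ⟨j', hj', h⟩
            · rcases hvj with hvj | hvj
              · exact F.rs j (h.symm.trans hvj)
              · exact F.rt j (h.symm.trans hvj)
            · exact hj.1 (F.end_inj hvj h ▸ hj')
          · exact hj.2.1 (F.end_inj hvj hae)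
        rw [Set.ncard_union_eq hd (Set.toFinite _) hfinE, Set.ncard_pair (hτi a hae)]
        exact Even.add (by decide) (J0.even _ hfinE le_rfl (F.ends_J0 J))
      · rintro v ((rfl | rfl) | ⟨j, hj, hvj⟩)
        · exact Conn.refl _
        · refine (hDR.trans ((supp_conn W2 W2.end_mem_support).mono hW2R)).trans (hc1.mono ?_)
          intro e he
          exact ⟨Or.inr ⟨hA1' he, fun h => Set.disjoint_left.1 hA he h⟩,
            fun h => (hpe i hi (hA1' he)).2 (Or.inl h)⟩
        · have hvs : v ∈ (F.p j).support := by
            rcases hvj with rfl | rfl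
            · exact (F.p j).start_mem_support
            · exact (F.p j).end_mem_support
          refine hDR.trans ((hJconn j hj v hvs).mono (union_subset hW2R ?_))
          intro e he
          exact ⟨Or.inl (Or.inr (mem_iUnion₂_of_mem hj he)),
            fun h => (hpe j hj.1 he).2 (Or.inl h)⟩

end

end TJ


namespace TJ

open Set

universe u w
variable {V : Type u}

/-- two edge-disjoint connections -/
def EDP (A : Set (Sym2 V)) (z x : V) : Prop :=
  ∃ A1 ⊆ A, ∃ A2 ⊆ A, Disjoint A1 A2 ∧ Conn A1 z x ∧ Conn A2 z x

theorem EDP.aux {A A1 A2 : Set (Sym2 V)} {z v v' : V} (hf : s(v, v') ∈ A) (h1 : A1 ⊆ A)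
    (h2 : A2 ⊆ A) (hd : Disjoint A1 A2) (hc2 : Conn A2 z v) (hf1 : s(v, v') ∈ A1)
    (hc : Conn (A1 \ {s(v, v')}) z v') : EDP A z v' := by
  refine ⟨A1 \ {s(v, v')}, sdiff_subset.trans h1, insert s(v, v') A2, insert_subset hf h2, ?_,
    hc, (hc2.mono (subset_insert _ _)).trans (Conn.edge (mem_insert _ _))⟩
  rw [Set.disjoint_left]
  rintro e ⟨he, he'⟩ (h | h)
  · exact he' h
  · exact Set.disjoint_left.1 hd he h

theorem EDP.aux2 {A A1 A2 Q : Set (Sym2 V)} {z v v' y : V} (hf : s(v, v') ∈ A) (h1 : A1 ⊆ A)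
    (h2 : A2 ⊆ A) (hd : Disjoint A1 A2) (hc2 : Conn (A2 \ Q) z v) (hf1 : s(v, v') ∉ A1)
    (hQ : Q ⊆ A) (hfQ : s(v, v') ∉ Q) (hc1 : Conn (A1 \ Q) z y) (hy : Conn Q v' y) :
    EDP A z v' := by
  refine ⟨A1 ∪ Q, union_subset h1 hQ, insert s(v, v') (A2 \ Q),
    insert_subset hf (sdiff_subset.trans h2), ?_,
    (hc1.mono (sdiff_subset.trans subset_union_left)).trans (hy.symm.mono subset_union_right),
    (hc2.mono (subset_insert _ _)).trans (Conn.edge (mem_insert _ _))⟩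
  rw [Set.disjoint_left]
  rintro e (he | he) (h | h)
  · exact hf1 (h ▸ he)
  · exact Set.disjoint_left.1 hd he h.1
  · exact hfQ (h ▸ he)
  · exact h.2 he

theorem EDP.step {A : Set (Sym2 V)} {z v v' : V} (h : EDP A z v) (hf : s(v, v') ∈ A)
    (hc : Conn (A \ {s(v, v')}) v v') : EDP A z v' := by
  obtain ⟨A1, h1, A2, h2, hd, hc1, hc2⟩ := h
  have hp : ∀ B : Set (Sym2 V), Conn B z v → Conn (B \ {s(v, v')}) z v ∨
      Conn (B \ {s(v, v')}) z v' := by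
    intro B hB
    obtain ⟨y, hy, hyc⟩ := peel (E' := B \ {s(v, v')}) (S := {v, v'}) hB (Or.inl rfl) (by
      intro a b hab hab'
      have : s(a, b) = s(v, v') := by
        by_contra hne
        exact hab' ⟨hab, hne⟩
      rw [Sym2.eq_iff] at this
      rcases this with ⟨rfl, _⟩ | ⟨rfl, _⟩
      · exact Or.inl rfl
      · exact Or.inr rfl)
    rcases hy with rfl | rfl
    · exact Or.inl hyc
    · exact Or.inr hyc
  -- we may assume the edge is in neither
  by_cases hfA : s(v, v') ∈ A1 ∧ Conn (A1 \ {s(v, v')}) z v'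
  · exact EDP.aux hf h1 h2 hd hc2 hfA.1 hfA.2
  by_cases hfB : s(v, v') ∈ A2 ∧ Conn (A2 \ {s(v, v')}) z v'
  · exact EDP.aux hf h2 h1 hd.symm hc1 hfB.1 hfB.2
  have hc1' : Conn (A1 \ {s(v, v')}) z v := by
    by_cases h : s(v, v') ∈ A1
    · exact (hp A1 hc1).resolve_right fun h' => hfA ⟨h, h'⟩
    · rw [sdiff_singleton_eq_self h]; exact hc1
  have hc2' : Conn (A2 \ {s(v, v')}) z v := by
    by_cases h : s(v, v') ∈ A2
    · exact (hp A2 hc2).resolve_right fun h' => hfB ⟨h, h'⟩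
    · rw [sdiff_singleton_eq_self h]; exact hc2
  set B1 := A1 \ {s(v, v')} with hB1
  set B2 := A2 \ {s(v, v')} with hB2
  have hB1A : B1 ⊆ A := sdiff_subset.trans h1
  have hB2A : B2 ⊆ A := sdiff_subset.trans h2
  have hBd : Disjoint B1 B2 := hd.mono sdiff_subset sdiff_subset
  let S : Set V := {y | Conn B1 z y ∨ Conn B2 z y}
  let Q : Set (Sym2 V) := {e | e ∈ A \ {s(v, v')} ∧ ∃ w ∈ e, w ∉ S}
  obtain ⟨y, hy, hyc⟩ := peel (E' := Q) (S := S) hc.symm (Or.inl hc1') (by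
    intro a b hab hab'
    by_contra ha
    exact hab' ⟨hab, a, by simp, ha⟩)
  have havoid : ∀ B : Set (Sym2 V), (∀ y, Conn B z y → y ∈ S) → ∀ y, Conn B z y →
      Conn (B \ Q) z y := by
    intro B hB y hy
    induction hy with
    | refl => exact Conn.refl _
    | @tail b c hb hbc ih =>
      refine ih.trans (Conn.edge ⟨hbc, ?_⟩)
      rintro ⟨_, x, hx, hxS⟩
      rcases Sym2.mem_iff.1 hx with rfl | rfl
      · exact hxS (hB _ hb)
      · exact hxS (hB _ (Conn.trans hb (Conn.edge hbc)))
  have hQA : Q ⊆ A := fun e he => he.1.1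
  have hfQ : s(v, v') ∉ Q := fun h => h.1.2 rfl
  have hav1 := havoid B1 fun y h => Or.inl h
  have hav2 := havoid B2 fun y h => Or.inr h
  rcases hy with hy | hy
  · exact EDP.aux2 hf hB1A hB2A hBd (hav2 _ hc2') (fun h => h.2 rfl) hQA hfQ (hav1 _ hy) hyc
  · exact EDP.aux2 hf hB2A hB1A hBd.symm (hav1 _ hc1') (fun h => h.2 rfl) hQA hfQ (hav2 _ hy) hyc

section
variable {G : SimpleGraph V} {ι : Type w}

theorem menger_walk {A : Set (Sym2 V)} {z v x : V} (q : G.Walk v x) (hq : q.IsTrail)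
    (hqA : ∀ e ∈ q.edges, e ∈ A) (h : ∀ e, Conn (A \ {e}) v x) (hz : EDP A z v) : EDP A z x := by
  induction q with
  | nil => exact hz
  | @cons v u x hadj p ih =>
    rw [SimpleGraph.Walk.isTrail_cons] at hq
    simp only [SimpleGraph.Walk.edges_cons, List.mem_cons, forall_eq_or_imp] at hqA
    have hp : Conn (A \ {s(v, u)}) u x := walk_conn p fun e he =>
      ⟨hqA.2 e he, fun h => hq.2 (h ▸ he)⟩
    have hvu : Conn (A \ {s(v, u)}) v u := (h s(v, u)).trans hp.symm
    refine ih hq.1 hqA.2 (fun e => ?_) (hz.step hqA.1 hvu)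
    by_cases he : e = s(v, u)
    · rw [he]; exact hp
    · exact (Conn.edge ⟨hqA.1, fun h => he h.symm⟩ : Conn (A \ {e}) v u).symm.trans (h e)

theorem menger {A : Set (Sym2 V)} (hA : A ⊆ G.edgeSet) {z x : V} (h : ∀ e, Conn (A \ {e}) z x) :
    EDP A z x := by
  obtain ⟨q, hq, hqA⟩ := conn_walk hA ((h s(z, z)).mono sdiff_subset)
  exact menger_walk q hq.isTrail hqA h
    ⟨∅, empty_subset _, ∅, empty_subset _, disjoint_empty _, Conn.refl _, Conn.refl _⟩

theorem first_hit {a b : V} (q : G.Walk a b) (S : Set V) (hb : b ∈ S) :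
    ∃ y ∈ S, ∃ (q1 : G.Walk a y) (q2 : G.Walk y b), q = q1.append q2 ∧
      ∀ v ∈ q1.support, v ∈ S → v = y := by
  induction q with
  | nil => exact ⟨_, hb, SimpleGraph.Walk.nil, SimpleGraph.Walk.nil, rfl, by simp⟩
  | @cons a u b hadj p ih =>
    by_cases ha : a ∈ S
    · exact ⟨a, ha, SimpleGraph.Walk.nil, SimpleGraph.Walk.cons hadj p, rfl, by simp⟩
    · obtain ⟨y, hy, q1, q2, rfl, h⟩ := ih hb
      refine ⟨y, hy, SimpleGraph.Walk.cons hadj q1, q2, rfl, ?_⟩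
      intro v hv hvS
      rw [SimpleGraph.Walk.support_cons, List.mem_cons] at hv
      rcases hv with rfl | hv
      · exact absurd hvS ha
      · exact h v hv hvS

theorem split_edge {a b : V} (q : G.Walk a b) {e : Sym2 V} (he : e ∈ q.edges) :
    ∃ (x y : V) (h : G.Adj x y) (q1 : G.Walk a x) (q2 : G.Walk y b), e = s(x, y) ∧
      q = q1.append (SimpleGraph.Walk.cons h q2) := by
  induction q with
  | nil => simp at he
  | @cons a u b hadj p ih =>
    rw [SimpleGraph.Walk.edges_cons, List.mem_cons] at he
    rcases he with rfl | he
    · exact ⟨a, u, hadj, SimpleGraph.Walk.nil, p, rfl, rfl⟩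
    · obtain ⟨x, y, h, q1, q2, h1, rfl⟩ := ih he
      exact ⟨x, y, h, SimpleGraph.Walk.cons hadj q1, q2, h1, rfl⟩

/-- marked vertices -/
def Marked (F : Fam G ι) (I : Set ι) (v : V) : Prop := ∃ i, i ∉ I ∧ v ∈ (F.p i).support

/-- finitely separated -/
def FS (F : Fam G ι) (E : Set (Sym2 V)) (I : Set ι) (z v : V) : Prop :=
  ∃ e ∈ E, ¬ Conn (E \ {e}) z v ∧ {j | j ∉ I ∧ Conn (E \ {e}) v (F.s j)}.Finite

theorem only_marked (F : Fam G ι) {I : Set ι} {z x : V} (W : G.Walk z x)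
    (h : ∀ v ∈ W.support, Marked F I v → v = x) : ∀ j, j ∉ I → Disjoint (F.pe j) (we W) := by
  intro j hj
  rw [Set.disjoint_left]
  intro e he he'
  induction e with
  | _ a b =>
    have h1 := h a (we_fst W he') ⟨j, hj, we_fst (F.p j) he⟩
    have h2 := h b (we_snd W he') ⟨j, hj, we_snd (F.p j) he⟩
    have h3 : G.Adj a b := by
      have := F.pe_sub j he
      simpa using this
    rw [h1, h2] at h3
    exact G.loopless.irrefl _ h3

theorem claimY_aux (F : Fam G ι) {R : Set (Sym2 V)} {I : Set ι} {τ : V}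
    (hstuck : ¬ CanMove F R I τ) (n : ℕ) : ∀ (D : Set (Sym2 V)) (z x : V), Valid F R D I τ z →
    ∀ (q : G.Walk z x), q.IsTrail → (∀ e ∈ q.edges, e ∈ G.edgeSet \ (R ∪ D)) →
    Marked F I x → (∀ v ∈ q.support, Marked F I v → v = x) → q.length ≤ n →
    FS F (G.edgeSet \ (R ∪ D)) I z x := by
  induction n using Nat.strong_induction_on with
  | _ n ih =>
  intro D z x hv q hq hqE hx hqm hn
  by_contra hFS
  set E' := G.edgeSet \ (R ∪ D) with hE'
  by_cases hall : ∀ e, Conn (E' \ {e}) z x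
  · -- Menger case
    obtain ⟨A1, h1, A2, h2, hd, hc1, hc2⟩ := menger (fun e he => he.1) hall
    obtain ⟨P, hP, hPA⟩ := conn_walk (h1.trans fun e he => he.1) hc1
    obtain ⟨x', hx', q1, q2, rfl, hq1⟩ := first_hit P {v | Marked F I v} hx
    obtain ⟨i, hi, hxi⟩ := hx'
    have hnd := hP.isTrail.edges_nodup
    rw [SimpleGraph.Walk.edges_append] at hnd hPA
    have hdd : Disjoint (we q1) (we q2) := Set.disjoint_left.2 fun e he he' =>
      List.disjoint_of_nodup_append hnd he he'
    have hq1A : we q1 ⊆ A1 := fun e he => hPA e (List.mem_append_left _ he)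
    have hq2A : we q2 ⊆ A1 := fun e he => hPA e (List.mem_append_right _ he)
    refine hstuck (claimM F hv hi hxi q1 (hq1A.trans h1) (only_marked F q1 hq1) ?_)
    refine (hc2.mono ?_).trans ((supp_conn q2 q2.end_mem_support).symm.mono ?_)
    · exact fun e he => ⟨h2 he, fun h => Set.disjoint_left.1 hd (hq1A h) he⟩
    · exact fun e he => ⟨h1 (hq2A he), fun h => Set.disjoint_left.1 hdd h he⟩
  · push Not at hall
    obtain ⟨e, he⟩ := hall
    have heq : e ∈ q.edges := by
      by_contra h
      exact he (walk_conn q fun e' he' => ⟨hqE e' he', fun h' => h (h' ▸ he')⟩)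
    have heE : e ∈ E' := hqE e heq
    obtain ⟨a, b, hab, q1, q2, rfl, rfl⟩ := split_edge q heq
    have hnd := hq.edges_nodup
    have hdisj := only_marked F _ hqm
    rw [SimpleGraph.Walk.edges_append, SimpleGraph.Walk.edges_cons] at hnd hqE
    have hd1 : s(a, b) ∉ we q1 := fun h =>
      List.disjoint_of_nodup_append hnd h (by simp)
    have hd12 : ∀ f ∈ we q1, f ∉ we q2 := fun f h h' =>
      List.disjoint_of_nodup_append hnd h (List.mem_cons_of_mem _ h')
    have hd2 : s(a, b) ∉ we q2 := by
      have := (List.nodup_append.1 hnd).2.1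
      exact (List.nodup_cons.1 this).1
    have hq1E : we q1 ⊆ E' := fun f hf => hqE f (List.mem_append_left _ hf)
    have hq2E : we q2 ⊆ E' := fun f hf => hqE f (List.mem_append_right _ (List.mem_cons_of_mem _ hf))
    have hza : ∀ B : Set (Sym2 V), we q1 ⊆ B → ∀ v ∈ q1.support, Conn B z v := fun B hB v hv =>
      (supp_conn q1 hv).mono hB
    have hq1e : we q1 ⊆ E' \ {s(a, b)} := fun f hf => ⟨hq1E hf, fun h => hd1 (h ▸ hf)⟩
    have hbx : Conn (E' \ {s(a, b)}) b x := by
      refine Conn.mono ?_ (supp_conn q2 q2.end_mem_support)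
      intro f hf
      exact ⟨hq2E hf, fun h => hd2 (h ▸ hf)⟩
    have hzb : ¬ Conn (E' \ {s(a, b)}) z b := fun h => he (h.trans hbx)
    have hinf : {j | j ∉ I ∧ Conn (E' \ {s(a, b)}) x (F.s j)}.Infinite := by
      intro h
      exact hFS ⟨s(a, b), heE, he, h⟩
    have hE1 : G.edgeSet \ (R ∪ (D ∪ insert s(a, b) (we q1))) = E' \ insert s(a, b) (we q1) := by
      rw [hE', Set.sdiff_sdiff, union_assoc]
    have hsub : insert s(a, b) (we q1) ⊆ E' := insert_subset heE hq1E
    have hval : Valid F R (D ∪ insert s(a, b) (we q1)) I τ b := by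
      refine ⟨hv.Rfin, hv.Dfin.union ((we_finite q1).insert _), ?_, hv.RE, ?_, hv.Ifin, hv.τmem,
        ?_, ?_, ?_⟩
      · rw [disjoint_union_right]
        refine ⟨hv.RD, Set.disjoint_left.2 fun f hf hf' => (hsub hf').2 (Or.inl hf)⟩
      · exact union_subset hv.DE (hsub.trans fun f hf => hf.1)
      · refine (hv.conn.mono subset_union_left).trans
          ((hza _ ?_ a q1.end_mem_support).trans (Conn.edge (Or.inr (mem_insert _ _))))
        exact (subset_insert _ _).trans subset_union_right
      · intro j hj
        rw [← union_assoc, disjoint_union_right]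
        refine ⟨hv.free j hj, (hdisj j hj).mono_right ?_⟩
        rintro f (rfl | hf)
        · show _ ∈ (q1.append (SimpleGraph.Walk.cons hab q2)).edges
          simp
        · show f ∈ (q1.append (SimpleGraph.Walk.cons hab q2)).edges
          have : f ∈ q1.edges := hf
          simp [this]
      · rw [hE1]
        refine hinf.mono ?_
        rintro j ⟨hj, hc⟩
        refine ⟨hj, ?_⟩
        refine (Conn.avoid (X := we q1) (z := z) (fun c d h => hza _ hq1e c (we_fst q1 h))
          hzb (hbx.trans hc)).mono ?_
        rintro f ⟨⟨h1, h2⟩, h3⟩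
        exact ⟨h1, fun h => h.elim h2 h3⟩
    have hlen : (q1.append (SimpleGraph.Walk.cons hab q2)).length =
        q1.length + (q2.length + 1) := by simp
    have hnew := ih q2.length (by omega) (D ∪ insert s(a, b) (we q1)) b x hval q2
      ((hq.of_append_right).of_cons) (by
        intro f hf
        rw [hE1]
        refine ⟨hq2E hf, ?_⟩
        rintro (rfl | h)
        · exact hd2 hf
        · exact hd12 f h hf) hx (fun v hv => hqm v (by simp [hv])) le_rfl
    rw [hE1] at hnew
    obtain ⟨e', he', hne', hfin'⟩ := hnew
    have he'q : e' ∉ we q1 := fun h => he'.2 (Or.inr h)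
    have he'e : e' ≠ s(a, b) := fun h => he'.2 (Or.inl h)
    have hq1e' : we q1 ⊆ E' \ {e'} := fun f hf => ⟨hq1E hf, fun h => he'q (h ▸ hf)⟩
    have hnz : ¬ Conn (E' \ {e'}) z x := by
      intro hzx
      have hq1e2 : we q1 ⊆ (E' \ {e'}) \ {s(a, b)} := fun f hf =>
        ⟨hq1e' hf, fun h => hd1 (h ▸ hf)⟩
      have hmn : (E' \ {e'}) \ {s(a, b)} ⊆ E' \ {s(a, b)} := fun f hf => ⟨hf.1.1, hf.2⟩
      obtain ⟨y, hy, hyc⟩ := peel (E' := (E' \ {e'}) \ {s(a, b)}) (S := {z, a, b}) hzx.symm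
        (Or.inl rfl) (by
          intro c d h h'
          have : s(c, d) = s(a, b) := by
            by_contra hne
            exact h' ⟨h, hne⟩
          rw [Sym2.eq_iff] at this
          rcases this with ⟨rfl, _⟩ | ⟨rfl, _⟩
          · exact Or.inr (Or.inl rfl)
          · exact Or.inr (Or.inr rfl))
      rcases hy with rfl | rfl | rfl
      · exact he (hyc.symm.mono hmn)
      · exact he ((hza _ hq1e _ q1.end_mem_support).trans (hyc.symm.mono hmn))
      · refine hne' (Conn.symm ((Conn.avoid (X := we q1) (z := z)
          (fun c d h => hza _ hq1e2 c (we_fst q1 h)) (fun h => he (h.mono hmn)) hyc).mono ?_))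
        rintro f ⟨⟨⟨h1, h2⟩, h3⟩, h4⟩
        exact ⟨⟨h1, fun h => h.elim h3 h4⟩, h2⟩
    refine hFS ⟨e', he'.1, hnz, hfin'.subset ?_⟩
    rintro j ⟨hj, hc⟩
    refine ⟨hj, (Conn.avoid (X := insert s(a, b) (we q1)) (z := z) ?_ hnz hc).mono ?_⟩
    · have h1 : Conn (E' \ {e'}) z a := hza _ hq1e' a q1.end_mem_support
      rintro c d (h | h)
      · rw [Sym2.eq_iff] at h
        rcases h with ⟨rfl, _⟩ | ⟨rfl, _⟩
        · exact h1
        · exact h1.trans (Conn.edge ⟨heE, fun h => he'e h.symm⟩)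
      · exact hza _ hq1e' c (we_fst q1 h)
    · rintro f ⟨⟨h1, h2⟩, h3⟩
      exact ⟨⟨h1, h3⟩, h2⟩

theorem claimY (F : Fam G ι) {R D : Set (Sym2 V)} {I : Set ι} {τ z : V}
    (hv : Valid F R D I τ z) (hstuck : ¬ CanMove F R I τ) {v : V} (hm : Marked F I v)
    (hc : Conn (G.edgeSet \ (R ∪ D)) z v) : FS F (G.edgeSet \ (R ∪ D)) I z v := by
  obtain ⟨P, hP, hPA⟩ := conn_walk (fun e he => he.1) hc
  obtain ⟨x, hx, q1, q2, rfl, hq1⟩ := first_hit P {v | Marked F I v} hm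
  have hnd := hP.isTrail.edges_nodup
  rw [SimpleGraph.Walk.edges_append] at hnd hPA
  obtain ⟨e, he, hne, hfin⟩ := claimY_aux F hstuck q1.length D z x hv q1 hP.isTrail.of_append_left
    (fun e he => hPA e (List.mem_append_left _ he)) hx hq1 le_rfl
  have heq : e ∈ q1.edges := by
    by_contra h
    exact hne (walk_conn q1 fun e' he' => ⟨hPA e' (List.mem_append_left _ he'),
      fun h' => h (h' ▸ he')⟩)
  have hxv : Conn ((G.edgeSet \ (R ∪ D)) \ {e}) x v := walk_conn q2 fun e' he' =>
    ⟨hPA e' (List.mem_append_right _ he'), fun h => by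
      rw [mem_singleton_iff] at h
      subst h
      exact List.disjoint_of_nodup_append hnd heq he'⟩
  refine ⟨e, he, fun h => hne (h.trans hxv.symm), hfin.subset ?_⟩
  rintro j ⟨hj, hc⟩
  exact ⟨hj, hxv.trans hc⟩

end

end TJ

namespace TJ

open Set
universe u w
variable {V : Type u} {G : SimpleGraph V} {ι : Type w}

/-- vertices separated from `z` by `e` -/
def Side (E : Set (Sym2 V)) (z : V) (e : Sym2 V) : Set V :=
  {v | Conn E z v ∧ ¬ Conn (E \ {e}) z v}

theorem conn_or {E : Set (Sym2 V)} {z v : V} (e : Sym2 V) (h : Conn E z v) :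
    Conn (E \ {e}) z v ∨ ∃ a b, e = s(a, b) ∧ s(a, b) ∈ E ∧ Conn (E \ {e}) z a ∧
      Conn (E \ {e}) b v := by
  induction h with
  | refl => exact Or.inl (Conn.refl _)
  | @tail x y _ h ih =>
    by_cases he : s(x, y) = e
    · rcases ih with ih | ⟨a, b, rfl, hE, ha, hb⟩
      · exact Or.inr ⟨x, y, he.symm, h, ih, Conn.refl _⟩
      · rcases Sym2.eq_iff.1 he with ⟨rfl, rfl⟩ | ⟨rfl, rfl⟩
        · exact Or.inr ⟨x, y, rfl, h, ha, Conn.refl _⟩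
        · exact Or.inl ha
    · have h1 : Conn (E \ {e}) x y := Conn.edge ⟨h, he⟩
      rcases ih with ih | ⟨a, b, rfl, hE, ha, hb⟩
      · exact Or.inl (ih.trans h1)
      · exact Or.inr ⟨a, b, rfl, hE, ha, hb.trans h1⟩

theorem Side.struct {E : Set (Sym2 V)} {z v : V} {e : Sym2 V} (h : v ∈ Side E z e) :
    ∃ a b, e = s(a, b) ∧ e ∈ E ∧ Conn (E \ {e}) z a ∧ b ∈ Side E z e ∧
      (∀ w ∈ Side E z e, Conn (E \ {e}) b w) := by
  rcases conn_or e h.1 with h' | ⟨a, b, he, hE, ha, hb⟩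
  · exact absurd h' h.2
  have hzb : ¬ Conn (E \ {e}) z b := fun h' => h.2 (h'.trans hb)
  refine ⟨a, b, he, he ▸ hE, ha, ⟨(ha.mono sdiff_subset).trans (Conn.edge hE), hzb⟩, ?_⟩
  intro w hw
  rcases conn_or e hw.1 with h' | ⟨a', b', he', hE', ha', hb'⟩
  · exact absurd h' hw.2
  rcases Sym2.eq_iff.1 (he.symm.trans he') with ⟨rfl, rfl⟩ | ⟨rfl, rfl⟩
  · exact hb'
  · exact absurd ha' hzb

theorem Side.conn {E : Set (Sym2 V)} {z v w : V} {e : Sym2 V} (h : v ∈ Side E z e)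
    (hw : w ∈ Side E z e) : Conn (E \ {e}) v w := by
  obtain ⟨a, b, -, -, -, -, h'⟩ := Side.struct h
  exact (h' v h).symm.trans (h' w hw)

theorem Side.of_conn {E : Set (Sym2 V)} {z v w : V} {e : Sym2 V} (h : v ∈ Side E z e)
    (hw : Conn (E \ {e}) v w) : w ∈ Side E z e :=
  ⟨h.1.trans (hw.mono sdiff_subset), fun h' => h.2 (h'.trans hw.symm)⟩

theorem Side.leave {E : Set (Sym2 V)} {z x y : V} {e : Sym2 V} (h : x ∈ Side E z e)
    (hy : y ∉ Side E z e) (hE : s(x, y) ∈ E) : s(x, y) = e := by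
  by_contra hne
  exact hy (Side.of_conn h (Conn.edge ⟨hE, hne⟩))

theorem Side.nest {E : Set (Sym2 V)} {z a b : V} {e e' : Sym2 V} (he : e = s(a, b))
    (ha : Conn (E \ {e}) z a) (hb : b ∈ Side E z e) (ha' : a ∈ Side E z e') :
    Side E z e ⊆ Side E z e' := by
  intro v hv
  refine ⟨hv.1, fun h => ?_⟩
  rcases conn_or e h with h' | ⟨a', b', he', hE', h1, h2⟩
  · refine hv.2 (h'.mono ?_)
    exact fun f hf => ⟨hf.1.1, hf.2⟩
  rcases Sym2.eq_iff.1 (he.symm.trans he') with ⟨rfl, rfl⟩ | ⟨rfl, rfl⟩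
  · exact ha'.2 (h1.mono sdiff_subset)
  · refine hb.2 (h1.mono ?_)
    exact fun f hf => ⟨hf.1.1, hf.2⟩

theorem Side.fin {E : Set (Sym2 V)} (hE : E ⊆ G.edgeSet) (z v : V) :
    {e | v ∈ Side E z e}.Finite := by
  by_cases hc : Conn E z v
  · obtain ⟨q, -, hq⟩ := conn_walk hE hc
    refine (we_finite q).subset fun e he => ?_
    by_contra hne
    refine he.2 (walk_conn q fun f hf => ⟨hq f hf, ?_⟩)
    rintro rfl
    exact hne hf
  · convert Set.finite_empty
    ext e
    simp only [mem_ofPred_eq, mem_empty_iff_false, iff_false]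
    exact fun h => hc h.1

/-- Components of the complement of a union of sides. -/
theorem comp_side {E W : Set (Sym2 V)} (hEW : E = G.edgeSet \ W) {z : V} {B : Set (Sym2 V)}
    (hB : ∀ e ∈ B, ∀ x y, x ∈ Side E z e → s(x, y) ∉ W) {U : Set V}
    (hU : U = {v | ∀ e ∈ B, v ∉ Side E z e}) (C : (G.induce (Uᶜ : Set V)).ConnectedComponent) :
    ∃ e ∈ B, ∃ a b, e = s(a, b) ∧ e ∈ E ∧ Conn (E \ {e}) z a ∧ a ∈ U ∧ b ∈ Side E z e ∧
      G.compSet U C = Side E z e := by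
  have hEG : E ⊆ G.edgeSet := hEW ▸ sdiff_subset
  induction C using SimpleGraph.ConnectedComponent.ind with
  | h v =>
  obtain ⟨v, hv⟩ := v
  have hv' : ∃ e ∈ B, v ∈ Side E z e := by
    by_contra hno
    push Not at hno
    exact hv (by rw [hU]; exact hno)
  have hfin : {e | e ∈ B ∧ v ∈ Side E z e}.Finite :=
    (Side.fin hEG z v).subset fun e he => he.2
  obtain ⟨e, ⟨heB, hve⟩, hmax⟩ := hfin.exists_maximalFor (fun e => Side E z e) _
    (by obtain ⟨e, h1, h2⟩ := hv'; exact ⟨e, h1, h2⟩)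
  obtain ⟨a, b, he, heE, ha, hb, hbw⟩ := Side.struct hve
  have haU : a ∈ U := by
    rw [hU]
    intro e' he' hae'
    have hs := Side.nest he ha hb hae'
    have := hmax (j := e') ⟨he', hs hve⟩ hs
    exact (this hae').2 ha
  refine ⟨e, heB, a, b, he, heE, ha, haU, hb, ?_⟩
  have hsub : Side E z e ⊆ Uᶜ := by
    intro x hx hxU
    rw [hU] at hxU
    exact hxU e heB hx
  ext x
  constructor
  · rintro ⟨⟨x, hxU⟩, hx, rfl⟩
    have hr : (G.induce (Uᶜ : Set V)).Reachable ⟨v, hv⟩ ⟨x, hxU⟩ :=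
      (SimpleGraph.ConnectedComponent.exact hx).symm
    obtain ⟨q⟩ := hr
    have key : ∀ (p p' : (Uᶜ : Set V)) (q : (G.induce (Uᶜ : Set V)).Walk p p'),
        p.1 ∈ Side E z e → p'.1 ∈ Side E z e := by
      intro p p' q
      induction q with
      | nil => exact id
      | @cons p1 p2 p3 h q ih =>
        intro hp
        refine ih ?_
        by_contra hn
        have hadj : s(p1.1, p2.1) ∈ G.edgeSet := h
        have hE : s(p1.1, p2.1) ∈ E := by
          rw [hEW]; exact ⟨hadj, hB e heB _ _ hp⟩
        have := Side.leave hp hn hE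
        rw [he] at this
        rcases Sym2.eq_iff.1 this with ⟨h1, h2⟩ | ⟨h1, h2⟩
        · exact hn (h2 ▸ hb)
        · exact p2.2 (h2 ▸ haU)
    exact key _ _ q hve
  · intro hx
    have hc := Side.conn hve hx
    have : x ∈ {y | ∃ hy : y ∈ Uᶜ, y ∈ Side E z e ∧
        (G.induce (Uᶜ : Set V)).Reachable ⟨v, hv⟩ ⟨y, hy⟩} := by
      refine hc.inv _ ⟨hv, hve, SimpleGraph.Reachable.refl _⟩ ?_
      rintro p q ⟨hp, hps, hr⟩ hpq
      have hq := Side.of_conn hps (Conn.edge hpq)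
      refine ⟨hsub hq, hq, hr.trans (SimpleGraph.Adj.reachable ?_)⟩
      exact hEG hpq.1
    obtain ⟨hy, -, hr⟩ := this
    exact ⟨⟨x, hy⟩, (SimpleGraph.ConnectedComponent.sound hr).symm, rfl⟩

theorem stuck_bad (F : Fam G ι) {R D : Set (Sym2 V)} {I : Set ι} {τ z : V}
    (hv : Valid F R D I τ z) (hstuck : ¬ CanMove F R I τ) :
    ∃ U : Set V,
        (∀ C : (G.induce (Uᶜ : Set V)).ConnectedComponent, G.JoinedByExactlyOneEdge U C) ∧
        {C : (G.induce (Uᶜ : Set V)).ConnectedComponent |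
          (G.compSet U C).Nontrivial}.Infinite := by
  obtain ⟨E, hE⟩ : ∃ E, E = G.edgeSet \ (R ∪ D) := ⟨_, rfl⟩
  have hEG : E ⊆ G.edgeSet := hE ▸ sdiff_subset
  let fp : Set (Sym2 V) := {e | {j | j ∉ I ∧ F.s j ∈ Side E z e}.Finite}
  let W : Set V := {v | ∃ f ∈ R ∪ D, v ∈ f}
  have hW : W.Finite := by
    have : W = ⋃ f ∈ R ∪ D, {v | v ∈ f} := by ext v; simp [W]
    rw [this]
    refine (hv.Rfin.union hv.Dfin).biUnion fun f _ => ?_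
    induction f with
    | h x y => 
      refine (Set.toFinite {x, y}).subset ?_
      intro v hv
      simpa using hv
  let B : Set (Sym2 V) := {e | e ∈ fp ∧ ∀ v ∈ W, v ∉ Side E z e}
  let U : Set V := {v | ∀ e ∈ B, v ∉ Side E z e}
  have hB : ∀ e ∈ B, ∀ x y, x ∈ Side E z e → s(x, y) ∉ R ∪ D := by
    intro e he x y hx hxy
    exact he.2 x ⟨_, hxy, Sym2.mem_mk_left _ _⟩ hx
  have hcomp := comp_side (U := U) hE hB rfl
  refine ⟨U, ?_, ?_⟩
  · intro C
    obtain ⟨e, heB, a, b, he, heE, ha, haU, hb, hC⟩ := hcomp C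
    refine ⟨e, ⟨hEG heE, b, hC ▸ hb, a, haU, by rw [he, Sym2.eq_swap]⟩, ?_⟩
    rintro e' ⟨he', x, hx, y, hy, rfl⟩
    rw [hC] at hx
    refine Side.leave hx (hy e heB) ?_
    rw [hE]
    exact ⟨he', hB e heB x y hx⟩
  · -- excluded indices
    let X : Set ι := ⋃ f ∈ W, ⋃ e ∈ {e | f ∈ Side E z e ∧ e ∈ fp},
      {j | j ∉ I ∧ F.s j ∈ Side E z e}
    have hX : X.Finite := by
      refine hW.biUnion fun f _ => ?_
      refine ((Side.fin hEG z f).subset fun e he => he.1).biUnion fun e he => he.2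
    have hfs : ∀ v, Marked F I v → Conn E z v → ∃ e ∈ fp, v ∈ Side E z e := by
      intro v hm hc
      obtain ⟨e, heE, hn, hfin⟩ := claimY F hv hstuck hm (hE ▸ hc)
      rw [← hE] at heE hn hfin
      exact ⟨e, hfin.subset fun j hj => ⟨hj.1, Side.conn ⟨hc, hn⟩ hj.2⟩, hc, hn⟩
    have hBof : ∀ i, i ∉ I → i ∉ X → ∀ e ∈ fp, F.s i ∈ Side E z e → e ∈ B := by
      intro i hi hiX e he hs
      refine ⟨he, fun f hf hfs => hiX ?_⟩
      simp only [X, mem_iUnion]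
      exact ⟨f, hf, e, ⟨hfs, he⟩, hi, hs⟩
    have hN := hv.inf.sdiff hX
    rw [← hE] at hN
    intro hfinC
    refine hN ((hfinC.biUnion (t := fun C => {j | j ∉ I ∧ F.s j ∈ G.compSet U C}) ?_).subset ?_)
    · intro C _
      obtain ⟨e, heB, a, b, he, heE, ha, haU, hb, hC⟩ := hcomp C
      rw [hC]
      exact heB.1
    · rintro i ⟨⟨hi, hc⟩, hiX⟩
      obtain ⟨e0, he0, hs0⟩ := hfs (F.s i) ⟨i, hi, (F.p i).start_mem_support⟩ hc
      have hsU : F.s i ∈ Uᶜ := fun h => h e0 (hBof i hi hiX e0 he0 hs0) hs0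
      let C := (G.induce (Uᶜ : Set V)).connectedComponentMk ⟨F.s i, hsU⟩
      have hsC : F.s i ∈ G.compSet U C := ⟨⟨F.s i, hsU⟩, rfl, rfl⟩
      simp only [mem_iUnion]
      refine ⟨C, ?_, hi, hsC⟩
      obtain ⟨e, heB, a, b, he, heE, ha, haU, hb, hC⟩ := hcomp C
      refine ⟨F.s i, hsC, F.t i, ?_, F.ne i⟩
      rw [hC] at hsC ⊢
      by_contra ht
      have hpE : F.pe i ⊆ E := by
        rw [hE]
        exact fun f hf => ⟨F.pe_sub i hf, fun h => Set.disjoint_left.1 (hv.free i hi) hf h⟩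
      have hep : e ∈ F.pe i := by
        by_contra hn
        refine ht (Side.of_conn hsC ((F.pe_conn i).mono ?_))
        intro f hf
        refine ⟨hpE hf, ?_⟩
        rintro rfl
        exact hn hf
      have ham : a ∈ (F.p i).support := by
        rw [he] at hep
        exact we_fst (F.p i) hep
      obtain ⟨e', he', hae'⟩ := hfs a ⟨i, hi, ham⟩ (ha.mono sdiff_subset)
      have hs := Side.nest he ha hb hae'
      exact haU e' (hBof i hi hiX e' he' (hs hsC)) hae'

end TJ

namespace TJ

open Set
universe u w
variable {V : Type u} {G : SimpleGraph V}

theorem backward (hG : G.Connected) (hno : ¬ ∃ U : Set V,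
        (∀ C : (G.induce (Uᶜ : Set V)).ConnectedComponent, G.JoinedByExactlyOneEdge U C) ∧
        {C : (G.induce (Uᶜ : Set V)).ConnectedComponent |
          (G.compSet U C).Nontrivial}.Infinite) (T : Set V) (hT : T.Infinite) :
    G.HasTJoin T := by
  apply J0.hasTJoin
  obtain ⟨r, -⟩ := hT.nonempty
  have hstar := star G.edgeSet r T (by
    intro t _
    obtain ⟨q⟩ := hG.preconnected r t
    exact walk_conn q fun e he => q.edges_subset_edgeSet he)
  rcases hstar with h | h
  · exact h
  obtain ⟨τ, hτ, A, hA, hc, P, h1, h2, h3⟩ := h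
  have hw : ∀ i : P, ∃ q : G.Walk i.1.1 i.1.2.1, q.IsPath ∧ ∀ e ∈ q.edges, e ∈ i.1.2.2 := by
    intro i
    exact conn_walk (((h1 i.1 i.2).2.2.2.1.trans sdiff_subset)) (h1 i.1 i.2).2.2.2.2
  choose p hp hpe using hw
  have huniq : ∀ i j : P, ∀ v ∈ T \ {τ}, (i.1.1 = v ∨ i.1.2.1 = v) → (j.1.1 = v ∨ j.1.2.1 = v) →
      i = j := fun i j v hv hi hj =>
    Subtype.ext ((h3 v hv).unique ⟨i.2, hi⟩ ⟨j.2, hj⟩)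
  let F : Fam G P :=
    { s := fun i => i.1.1
      t := fun i => i.1.2.1
      p := p
      r := τ
      path := hp
      disj := fun i j hij e he he' => Set.disjoint_left.1
        (h2 i.1 i.2 j.1 j.2 fun h => hij (Subtype.ext h)) (hpe i e he) (hpe j e he')
      ne := fun i => (h1 i.1 i.2).1
      ends_disj := fun i j hij => by
        refine ⟨fun h => hij ?_, fun h => hij ?_, fun h => hij ?_⟩
        · exact huniq i j _ (h1 i.1 i.2).2.1 (Or.inl rfl) (Or.inl h.symm)
        · exact huniq i j _ (h1 i.1 i.2).2.1 (Or.inl rfl) (Or.inr h.symm)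
        · exact huniq i j _ (h1 i.1 i.2).2.2.1 (Or.inr rfl) (Or.inr h.symm)
      rs := fun i h => (h1 i.1 i.2).2.1.2 h.symm
      rt := fun i h => (h1 i.1 i.2).2.2.1.2 h.symm }
  have hTe : insert F.r (F.ends univ) = T := by
    ext v
    constructor
    · rintro (rfl | ⟨i, -, rfl | rfl⟩)
      · exact hτ
      · exact (h1 i.1 i.2).2.1.1
      · exact (h1 i.1 i.2).2.2.1.1
    · intro hv
      by_cases hvt : v = τ
      · exact Or.inl hvt
      · obtain ⟨q, ⟨hq, hqv⟩, -⟩ := h3 v ⟨hv, hvt⟩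
        exact Or.inr ⟨⟨q, hq⟩, trivial, hqv.imp Eq.symm Eq.symm⟩
  have : Infinite P := by
    by_contra hfin
    rw [not_infinite_iff_finite] at hfin
    refine hT ?_
    rw [← hTe]
    exact (F.ends_finite (Set.finite_univ)).insert _
  rw [← hTe]
  refine game F hG ?_
  intro R D I τ' z hv
  by_contra hst
  exact hno (stuck_bad F hv hst)

theorem leave_edge {U : Set V} {C : (G.induce (Uᶜ : Set V)).ConnectedComponent} {x y : V}
    (q : G.Walk x y) (hx : x ∈ G.compSet U C) (hy : y ∉ G.compSet U C) :
    ∃ e ∈ q.edges, e ∈ G.edgeSet ∧ ∃ a ∈ G.compSet U C, ∃ b ∈ U, e = s(a, b) := by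
  induction q with
  | nil => exact absurd hx hy
  | @cons x u y hadj q ih =>
    by_cases hu : u ∈ G.compSet U C
    · obtain ⟨e, he, h⟩ := ih hu hy
      exact ⟨e, by simp [he], h⟩
    · refine ⟨s(x, u), by simp, hadj, x, hx, u, ?_, rfl⟩
      by_contra huU
      obtain ⟨⟨x', hx'⟩, hxC, rfl⟩ := hx
      refine hu ⟨⟨u, huU⟩, ?_, rfl⟩
      rw [SimpleGraph.ConnectedComponent.mem_supp_iff] at hxC ⊢
      rw [← hxC]
      refine SimpleGraph.ConnectedComponent.sound (SimpleGraph.Adj.reachable ?_)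
      exact hadj.symm

theorem forward {U : Set V}
    (hU : ∀ C : (G.induce (Uᶜ : Set V)).ConnectedComponent, G.JoinedByExactlyOneEdge U C)
    (hinf : {C : (G.induce (Uᶜ : Set V)).ConnectedComponent |
          (G.compSet U C).Nontrivial}.Infinite) :
    ∃ T : Set V, T.Infinite ∧ ¬ G.HasTJoin T := by
  classical
  obtain ⟨C0, -⟩ := hinf.nonempty
  obtain ⟨-, ⟨-, -, -, u, hu, -⟩, -⟩ := hU C0
  have hch : ∀ C : {C : (G.induce (Uᶜ : Set V)).ConnectedComponent //
      (G.compSet U C).Nontrivial}, ∃ a b, a ∈ G.compSet U C.1 ∧ b ∈ G.compSet U C.1 ∧ a ≠ b := by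
    rintro ⟨C, a, ha, b, hb, hab⟩
    exact ⟨a, b, ha, hb, hab⟩
  choose a b ha hb hab using hch
  have hcomp : ∀ C C' v, v ∈ G.compSet U C → v ∈ G.compSet U C' → C = C' := by
    rintro C C' v ⟨x, hx, rfl⟩ ⟨y, hy, hxy⟩
    have : x = y := Subtype.ext hxy.symm
    subst this
    rw [SimpleGraph.ConnectedComponent.mem_supp_iff] at hx hy
    rw [← hx, ← hy]
  have hnU : ∀ C v, v ∈ G.compSet U C → v ∉ U := by
    rintro C v ⟨x, hx, rfl⟩
    exact x.2
  have hai : Function.Injective a := by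
    intro C C' h
    exact Subtype.ext (hcomp _ _ _ (ha C) (h ▸ ha C'))
  refine ⟨insert u (range a ∪ range b), ?_, ?_⟩
  · have : Infinite {C : (G.induce (Uᶜ : Set V)).ConnectedComponent //
      (G.compSet U C).Nontrivial} := hinf.to_subtype
    exact (Set.infinite_range_of_injective hai).mono
      (subset_union_left.trans (subset_insert _ _))
  rintro ⟨P, h1, h2, h3⟩
  -- normalised form: from every terminal a path
  have hfrom : ∀ v ∈ insert u (range a ∪ range b), ∃ p ∈ P, ∃ w, ∃ q : G.Walk v w,
      w ∈ insert u (range a ∪ range b) ∧ v ≠ w ∧ (p.1 = w ∨ p.2.1 = w) ∧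
      (p.1 = v ∨ p.2.1 = v) ∧ (∀ x, p.1 = x ∨ p.2.1 = x → x = v ∨ x = w) ∧
      ∀ e ∈ q.edges, e ∈ p.2.2.edges := by
    intro v hv
    obtain ⟨⟨x, y, q⟩, ⟨hp, hpv⟩, -⟩ := h3 v hv
    obtain ⟨-, hne, hx, hy⟩ := h1 _ hp
    dsimp only at hpv hne hx hy
    rcases hpv with rfl | rfl
    · exact ⟨_, hp, y, q, hy, hne, Or.inr rfl, Or.inl rfl, by rintro z (h | h) <;> simp_all,
        fun e he => he⟩
    · exact ⟨_, hp, x, q.reverse, hx, hne.symm, Or.inl rfl, Or.inr rfl,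
        by rintro z (h | h) <;> simp_all, fun e he => by simpa using he⟩
  obtain ⟨p, hp, w, q, hw, huw, hpw, hpu, hpe, hq⟩ := hfrom u (Or.inl rfl)
  have hw' : ∃ C, ∃ w', w' ∈ insert u (range a ∪ range b) ∧ w ∈ G.compSet U C ∧
      w' ∈ G.compSet U C ∧ w ≠ w' ∧ ∀ x ∈ insert u (range a ∪ range b),
        x ∈ G.compSet U C → x = w ∨ x = w' := by
    have hall : ∀ C, ∀ x ∈ insert u (range a ∪ range b), x ∈ G.compSet U C.1 →
        x = a C ∨ x = b C := by
      rintro C x (rfl | ⟨C', rfl⟩ | ⟨C', rfl⟩) hx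
      · exact absurd hu (hnU _ _ hx)
      · have : C' = C := Subtype.ext (hcomp _ _ _ (ha C') hx)
        subst this; exact Or.inl rfl
      · have : C' = C := Subtype.ext (hcomp _ _ _ (hb C') hx)
        subst this; exact Or.inr rfl
    rcases hw with rfl | ⟨C, rfl⟩ | ⟨C, rfl⟩
    · exact absurd rfl huw
    · exact ⟨C.1, b C, Or.inr (Or.inr ⟨C, rfl⟩), ha C, hb C, hab C, hall C⟩
    · exact ⟨C.1, a C, Or.inr (Or.inl ⟨C, rfl⟩), hb C, ha C, (hab C).symm,
        fun x hx hxC => (hall C x hx hxC).symm⟩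
  obtain ⟨C, w', hw'T, hwC, hw'C, hww', hall⟩ := hw'
  obtain ⟨p', hp', y, q', hy, hw'y, hpy, hpw', hpe', hq'⟩ := hfrom w' hw'T
  have hpp : p ≠ p' := by
    rintro rfl
    rcases hpe w' hpw' with h | h
    · exact hnU _ _ hw'C (h ▸ hu)
    · exact hww' h.symm
  have hyw : y ≠ w := by
    rintro rfl
    exact hpp ((h3 y hy).unique ⟨hp, hpw⟩ ⟨hp', hpy⟩)
  have hyC : y ∉ G.compSet U C := by
    intro h
    rcases hall y hy h with h | h
    · exact hyw h
    · exact hw'y h.symm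
  obtain ⟨e', he', he'P⟩ := leave_edge q' hw'C hyC
  obtain ⟨e, he, heP⟩ := leave_edge q.reverse hwC (fun h => hnU _ _ h hu)
  have : e = e' := (hU C).unique heP he'P
  subst this
  exact h2 p hp p' hp' hpp e (hq e (by simpa using he)) (hq' e he')

end TJ

/-- An infinite connected graph `G` contains a `T`-join for every infinite `T ⊆ V(G)` iff
there is no `U ⊆ V(G)` such that every connected component of `G − U` is joined to `U` by
exactly one edge and infinitely many of these components are nontrivial. -/
theorem infinite_hasTJoin_iff {V : Type*} [Infinite V] (G : SimpleGraph V) (hG : G.Connected) :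
    (∀ T : Set V, T.Infinite → G.HasTJoin T) ↔
      ¬ ∃ U : Set V,
        (∀ C : (G.induce (Uᶜ : Set V)).ConnectedComponent, G.JoinedByExactlyOneEdge U C) ∧
        {C : (G.induce (Uᶜ : Set V)).ConnectedComponent | (G.compSet U C).Nontrivial}.Infinite := by
  constructor
  · rintro h ⟨U, hU, hinf⟩
    obtain ⟨T, hT, hn⟩ := TJ.forward hU hinf
    exact hn (h T hT)
  · intro hno T hT
    exact TJ.backward hG hno T hT
end

section
/- Let G be a connected graph and suppose there exists a set U of vertices of G such that every connected component of G − U is joined to U by exactly one edge of G and infinitely many of these components are nontrivial (i.e., have more than one vertex). Then there exists an infinite subset T of V(G) for which G has no T-join; indeed, one may take T to consist of one vertex of U together with two vertices from each nontrivial connected component of G − U. -/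
theorem cut_edge_mem {V : Type*} (G : SimpleGraph V) (U : Set V)
    (C : (G.induce (Uᶜ : Set V)).ConnectedComponent) (e : Sym2 V)
    (he : ∀ e' : Sym2 V, (e' ∈ G.edgeSet ∧ ∃ x ∈ G.compSet U C, ∃ y ∈ U, e' = s(x, y)) → e' = e)
    {a b : V} (p : G.Walk a b) (ha : a ∈ G.compSet U C) (hb : b ∉ G.compSet U C) :
    e ∈ p.edges := by
  obtain ⟨d, hd, h1, h2⟩ := p.exists_boundary_dart (G.compSet U C) ha hb
  have hU : d.snd ∈ U := by
    by_contra hU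
    apply h2
    obtain ⟨x, hx, hxe⟩ := h1
    refine ⟨⟨d.snd, hU⟩, ?_, rfl⟩
    rw [SimpleGraph.ConnectedComponent.mem_supp_iff] at hx ⊢
    rw [← hx, SimpleGraph.ConnectedComponent.eq]
    apply SimpleGraph.Adj.reachable
    have := d.adj
    rw [← hxe] at this
    exact this.symm
  have : d.edge = e := he d.edge ⟨d.edge_mem, d.fst, h1, d.snd, hU, rfl⟩
  rw [← this]
  exact List.mem_map_of_mem hd

theorem cut_edge_mem_sym {V : Type*} (G : SimpleGraph V) (U : Set V)
    (C : (G.induce (Uᶜ : Set V)).ConnectedComponent) (e : Sym2 V)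
    (he : ∀ e' : Sym2 V, (e' ∈ G.edgeSet ∧ ∃ x ∈ G.compSet U C, ∃ y ∈ U, e' = s(x, y)) → e' = e)
    {a b : V} (p : G.Walk a b) (ha : a ∉ G.compSet U C) (hb : b ∈ G.compSet U C) :
    e ∈ p.edges := by
  have := cut_edge_mem G U C e he p.reverse hb ha
  simpa using this

theorem compSet_unique {V : Type*} (G : SimpleGraph V) (U : Set V)
    (C D : (G.induce (Uᶜ : Set V)).ConnectedComponent) (x : V)
    (h1 : x ∈ G.compSet U C) (h2 : x ∈ G.compSet U D) : C = D := by
  obtain ⟨y, hy, rfl⟩ := h1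
  obtain ⟨z, hz, hzy⟩ := h2
  obtain rfl := Subtype.ext hzy
  rw [SimpleGraph.ConnectedComponent.mem_supp_iff] at hy hz
  rw [← hy, hz]

/-- If `G` is connected and there is a `U ⊆ V(G)` such that every connected component of
`G − U` is joined to `U` by exactly one edge and infinitely many of these components are
nontrivial, then there is an infinite `T ⊆ V(G)` with no `T`-join; moreover one may take `T`
to consist of one vertex of `U` together with two vertices from each nontrivial component of
`G − U`. -/
theorem exists_infinite_no_tJoin {V : Type*} (G : SimpleGraph V) (hG : G.Connected)
    (U : Set V)
    (hone : ∀ C : (G.induce (Uᶜ : Set V)).ConnectedComponent, G.JoinedByExactlyOneEdge U C)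
    (hinf : {C : (G.induce (Uᶜ : Set V)).ConnectedComponent |
      (G.compSet U C).Nontrivial}.Infinite) :
    ∃ T : Set V, T.Infinite ∧ ¬ G.HasTJoin T ∧
      ∃ u ∈ U, u ∈ T ∧
        T ⊆ insert u (⋃ C ∈ {C : (G.induce (Uᶜ : Set V)).ConnectedComponent |
          (G.compSet U C).Nontrivial}, G.compSet U C) ∧
        ∀ C : (G.induce (Uᶜ : Set V)).ConnectedComponent, (G.compSet U C).Nontrivial →
          (T ∩ G.compSet U C).ncard = 2 := by
  obtain ⟨C₀, hC₀⟩ := hinf.nonempty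
  obtain ⟨-, ⟨-, -, -, u, hu, -⟩, -⟩ := hone C₀
  have hab : ∀ C : (G.induce (Uᶜ : Set V)).ConnectedComponent, ∃ a b : V,
      (G.compSet U C).Nontrivial → a ∈ G.compSet U C ∧ b ∈ G.compSet U C ∧ a ≠ b := by
    intro C
    by_cases h : (G.compSet U C).Nontrivial
    · obtain ⟨a, ha, b, hb, hne⟩ := h
      exact ⟨a, b, fun _ => ⟨ha, hb, hne⟩⟩
    · exact ⟨u, u, fun h' => absurd h' h⟩
  choose a b hab using hab
  have huC : ∀ C, u ∉ G.compSet U C := by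
    rintro C ⟨x, -, hx⟩
    exact x.2 (hx ▸ hu)
  have hTC : ∀ C : (G.induce (Uᶜ : Set V)).ConnectedComponent, (G.compSet U C).Nontrivial →
      (insert u {v | ∃ C, (G.compSet U C).Nontrivial ∧ (v = a C ∨ v = b C)}) ∩ G.compSet U C
        = {a C, b C} := by
    intro C hC
    ext v
    constructor
    · rintro ⟨rfl | ⟨D, hD, hv⟩, hvC⟩
      · exact absurd hvC (huC C)
      · have hvD : v ∈ G.compSet U D := by
          rcases hv with rfl | rfl
          · exact (hab D hD).1
          · exact (hab D hD).2.1
        obtain rfl := compSet_unique G U C D v hvC hvD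
        simpa using hv
    · intro hv
      refine ⟨Or.inr ⟨C, hC, by simpa using hv⟩, ?_⟩
      rcases hv with rfl | rfl
      · exact (hab C hC).1
      · exact (hab C hC).2.1
  refine ⟨insert u {v | ∃ C, (G.compSet U C).Nontrivial ∧ (v = a C ∨ v = b C)}, ?_, ?_,
    u, hu, Set.mem_insert _ _, ?_, ?_⟩
  · have hinj : Set.InjOn a {C | (G.compSet U C).Nontrivial} := by
      intro C hC D hD h
      exact compSet_unique G U C D (a C) (hab C hC).1 (h ▸ (hab D hD).1)
    refine (hinf.image hinj).mono ?_
    rintro _ ⟨C, hC, rfl⟩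
    exact Or.inr ⟨C, hC, Or.inl rfl⟩
  · rintro ⟨P, hP1, hP2, hP3⟩
    set T : Set V := insert u {v | ∃ C, (G.compSet U C).Nontrivial ∧ (v = a C ∨ v = b C)} with hT
    -- a vertex of `T` in a component, joined to `u`, leads to a contradiction
    have key : ∀ p ∈ P, ∀ t, ((p.1 = u ∧ p.2.1 = t) ∨ (p.1 = t ∧ p.2.1 = u)) → t ∈ T →
        t ≠ u → False := by
      intro p hp t hpt htT htu
      obtain ⟨C, hC, ht⟩ : ∃ C, (G.compSet U C).Nontrivial ∧ (t = a C ∨ t = b C) := by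
        rcases htT with h | h
        · exact absurd h htu
        · exact h
      have hABC := hab C hC
      have htC : t ∈ G.compSet U C := by
        rcases ht with rfl | rfl
        · exact hABC.1
        · exact hABC.2.1
      obtain ⟨t', ht'C, ht'T, htt', hall⟩ : ∃ t' ∈ G.compSet U C, t' ∈ T ∧ t' ≠ t ∧
          ∀ s ∈ T, s ∈ G.compSet U C → s = t ∨ s = t' := by
        have hmem : ∀ s ∈ T, s ∈ G.compSet U C → s = a C ∨ s = b C := by
          intro s hs hsC
          have : s ∈ T ∩ G.compSet U C := ⟨hs, hsC⟩
          rw [hTC C hC] at this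
          simpa using this
        rcases ht with rfl | rfl
        · exact ⟨b C, hABC.2.1, Or.inr ⟨C, hC, Or.inr rfl⟩, hABC.2.2.symm, hmem⟩
        · exact ⟨a C, hABC.1, Or.inr ⟨C, hC, Or.inl rfl⟩, hABC.2.2,
            fun s hs hsC => (hmem s hs hsC).symm⟩
      have ht'u : t' ≠ u := fun h => huC C (h ▸ ht'C)
      obtain ⟨q, ⟨hq, hqt⟩, -⟩ := hP3 t' ht'T
      have hpq : p ≠ q := by
        rintro rfl
        rcases hpt with ⟨h1, h2⟩ | ⟨h1, h2⟩ <;> rcases hqt with h | h <;> simp_all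
      have hpt1 : p.1 = t ∨ p.2.1 = t := by tauto
      have hqnt : ¬ (q.1 = t ∨ q.2.1 = t) := fun h =>
        hpq ((hP3 t htT).unique ⟨hp, hpt1⟩ ⟨hq, h⟩)
      obtain ⟨-, hqne, hq1, hq2⟩ := hP1 q hq
      obtain ⟨e, -, he⟩ := hone C
      have hep : e ∈ p.2.2.edges := by
        rcases hpt with ⟨h1, h2⟩ | ⟨h1, h2⟩
        · exact cut_edge_mem_sym G U C e he _ (by rw [h1]; exact huC C) (by rw [h2]; exact htC)
        · exact cut_edge_mem G U C e he _ (by rw [h1]; exact htC) (by rw [h2]; exact huC C)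
      have heq : e ∈ q.2.2.edges := by
        rcases hqt with h | h
        · refine cut_edge_mem G U C e he _ (by rw [h]; exact ht'C) (fun hc => ?_)
          rcases hall _ hq2 hc with h' | h'
          · exact hqnt (Or.inr h')
          · exact hqne (h.trans h'.symm)
        · refine cut_edge_mem_sym G U C e he _ (fun hc => ?_) (by rw [h]; exact ht'C)
          rcases hall _ hq1 hc with h' | h'
          · exact hqnt (Or.inl h')
          · exact hqne (h'.trans h.symm)
      exact hP2 p hp q hq hpq e hep heq
    obtain ⟨p, ⟨hp, hpu⟩, -⟩ := hP3 u (Set.mem_insert _ _)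
    obtain ⟨-, hne, h1, h2⟩ := hP1 p hp
    rcases hpu with h | h
    · exact key p hp p.2.1 (Or.inl ⟨h, rfl⟩) h2 (fun h' => hne (h.trans h'.symm))
    · exact key p hp p.1 (Or.inr ⟨rfl, h⟩) h1 (fun h' => hne (h'.trans h.symm))
  · apply Set.insert_subset_insert
    rintro v ⟨C, hC, hv⟩
    refine Set.mem_biUnion (x := C) hC ?_
    rcases hv with rfl | rfl
    · exact (hab C hC).1
    · exact (hab C hC).2.1
  · intro C hC
    rw [hTC C hC]
    exact Set.ncard_pair (hab C hC).2.2
end
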